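/- If K is a convex body in ℝⁿ (n ≥ 2) and z ∈ int K is the Santaló point of K, then |K|·|K^z| ≤ κ_n², where κ_n is the volume of the Euclidean unit ball Bⁿ. -/

import Mathlib

open MeasureTheory

noncomputable section

/-- The polar of a set `K ⊆ ℝⁿ` with respect to a point `z`:
`K^z = {x : ⟨x−z, y−z⟩ ≤ 1 for all y ∈ K}`. -/
def polarBody {n : ℕ} (K : Set (EuclideanSpace ℝ (Fin n))) (z : EuclideanSpace ℝ (Fin n)) :
    Set (EuclideanSpace ℝ (Fin n)) :=
  {x | ∀ y ∈ K, (inner ℝ (x - z) (y - z) : ℝ) ≤ 1}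

/-! Following Lehec, a functional inequality `∫ f * ∫ g ≤ (2π)ⁿ` for `f x * g y ≤ exp (-⟪x, y⟫)`
with `g` centered is proved by induction on the dimension. A hyperplane halves `f`, and a shear
brings the barycenters of both halves onto one line orthogonal to it. Moving the origin to where
this line meets the hyperplane multiplies `g` by the exponential of a linear function, which by
`1 + s ≤ exp s` does not decrease `∫ g`. On each half, the product of a line orthogonal to the
hyperplane for `f` with one for `g` satisfies the one-dimensional inequality on a half-line,
which is Prékopa–Leindler in the variable `log s`, and the induction hypothesis applies to the
integrals of `f` and `g` over these lines.

Gaussians of a gauge and of its polar gauge turn this into a statement on volumes. Finally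
`∫ exp (⟪w, y⟫ - h y) dy` is proportional to `|{h - ⟪w, ·⟫ ≤ 1}|`, which is `|K^(z+w)|` for `h`
the support function of `K - z`. Differentiating at a minimum `w = 0` shows that `K^z - z` is
centered. -/

section

open Set Filter Topology Module
open scoped ENNReal NNReal Pointwise RealInnerProductSpace

/-! ### The Prékopa–Leindler inequality on the line -/

theorem volume_add_volume_le_volume_add_of_isCompact {A B : Set ℝ} (hA : IsCompact A)
    (hB : IsCompact B) (hA₀ : A.Nonempty) (hB₀ : B.Nonempty) :
    volume A + volume B ≤ volume (A + B) := by
  obtain ⟨a, haA, ha⟩ := hA.exists_isGreatest hA₀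
  obtain ⟨b, hbB, hb⟩ := hB.exists_isLeast hB₀
  -- The translates `A + b` and `a + B` meet only at `a + b`.
  have disjoint : AEDisjoint volume ((· + b) '' A) ((a + ·) '' B) := by
    refine measure_mono_null (t := {a + b}) ?_ (by simp)
    rintro _ ⟨⟨x, hx, rfl⟩, ⟨y, hy, hxy⟩⟩
    have hxa := ha hx
    have hby := hb hy
    simp only [mem_singleton_iff] at hxy ⊢
    linarith
  have measurable : MeasurableSet ((a + ·) '' B) :=
    (hB.image (continuous_const_add a)).measurableSet
  calc volume A + volume B = volume ((· + b) '' A ∪ (a + ·) '' B) := by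
        rw [measure_union₀ measurable.nullMeasurableSet disjoint]
        simp
    _ ≤ volume (A + B) := measure_mono <| union_subset
        (image_subset_iff.2 fun x hx => add_mem_add hx hbB)
        (image_subset_iff.2 fun x hx => add_mem_add haA hx)

theorem volume_add_volume_le_two_mul_of_midpoint_mem {A B D : Set ℝ} (hA : MeasurableSet A)
    (hB : MeasurableSet B) (hA₀ : A.Nonempty) (hB₀ : B.Nonempty)
    (hD : ∀ a ∈ A, ∀ b ∈ B, (a + b) / 2 ∈ D) :
    volume A + volume B ≤ 2 * volume D := by
  obtain ⟨a, ha⟩ := hA₀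
  obtain ⟨b, hb⟩ := hB₀
  have compact_case : ∀ A' ⊆ A, ∀ B' ⊆ B, IsCompact A' → IsCompact B' →
      volume A' + volume B' ≤ 2 * volume D := by
    intro A' hA' B' hB' cA' cB'
    have sum_subset : insert a A' + insert b B' ⊆ (2 : ℝ) • D := by
      rintro _ ⟨x, hx, y, hy, rfl⟩
      exact ⟨(x + y) / 2, hD x (insert_subset ha hA' hx) y (insert_subset hb hB' hy),
        mul_div_cancel₀ _ two_ne_zero⟩
    calc volume A' + volume B' ≤ volume (insert a A') + volume (insert b B') := by
          gcongr <;> exact subset_insert _ _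
      _ ≤ volume (insert a A' + insert b B') :=
          volume_add_volume_le_volume_add_of_isCompact (cA'.insert a) (cB'.insert b)
            (insert_nonempty _ _) (insert_nonempty _ _)
      _ ≤ volume ((2 : ℝ) • D) := measure_mono sum_subset
      _ = 2 * volume D := by simp [Measure.addHaar_smul]
  simp_rw [hA.measure_eq_iSup_isCompact, hB.measure_eq_iSup_isCompact, iSup_and']
  exact ENNReal.biSup_add_biSup_le' ⟨∅, by simp⟩ ⟨∅, by simp⟩
    fun A' hA' B' hB' => compact_case A' hA'.1 B' hB'.1 hA'.2 hB'.2

theorem lintegral_add_lintegral_le_two_mul_of_isLUB {φ ψ χ : ℝ → ℝ≥0} (hφ : Measurable φ)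
    (hψ : Measurable ψ) (hχ : Measurable χ) (hφ₁ : IsLUB (range φ) 1) (hψ₁ : IsLUB (range ψ) 1)
    (h : ∀ p q, φ p * ψ q ≤ χ ((p + q) / 2) ^ 2) :
    (∫⁻ p, φ p) + (∫⁻ p, ψ p) ≤ 2 * ∫⁻ p, χ p := by
  have layer_cake : ∀ f : ℝ → ℝ≥0, Measurable f →
      ∫⁻ p, (f p : ℝ≥0∞) = ∫⁻ t in Ioi (0 : ℝ), volume {p | t < f p} := fun f hf => by
    simpa using lintegral_eq_lintegral_meas_lt volume (.of_forall fun p => (f p).coe_nonneg)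
      hf.coe_nnreal_real.aemeasurable
  have antitone : ∀ f : ℝ → ℝ≥0, Antitone fun t : ℝ => volume {p | t < f p} :=
    fun f s t hst => measure_mono fun p hp => hst.trans_lt hp
  rw [layer_cake φ hφ, layer_cake ψ hψ, layer_cake χ hχ,
    ← lintegral_add_left (antitone φ).measurable, ← lintegral_const_mul _ (antitone χ).measurable]
  refine setLIntegral_mono' measurableSet_Ioi fun t (ht : 0 < t) => ?_
  lift t to ℝ≥0 using ht.le
  simp only [NNReal.coe_lt_coe]
  rcases lt_or_ge t 1 with ht₁ | ht₁
  · have nonempty : ∀ {f : ℝ → ℝ≥0}, IsLUB (range f) 1 → {p | t < f p}.Nonempty := fun hf => by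
      obtain ⟨_, ⟨p, rfl⟩, hp⟩ := (lt_isLUB_iff hf).1 ht₁
      exact ⟨p, hp⟩
    refine volume_add_volume_le_two_mul_of_midpoint_mem (measurableSet_lt measurable_const hφ)
      (measurableSet_lt measurable_const hψ) (nonempty hφ₁)
      (nonempty hψ₁) fun p hp q hq => ?_
    refine lt_of_pow_lt_pow_left₀ 2 zero_le (lt_of_lt_of_le ?_ (h p q))
    rw [sq]
    exact mul_lt_mul'' hp hq zero_le zero_le
  · have empty : ∀ f : ℝ → ℝ≥0, IsLUB (range f) 1 → {p | t < f p} = ∅ := fun f hf =>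
      eq_empty_of_forall_notMem fun p hp => hp.not_ge ((hf.1 ⟨p, rfl⟩).trans ht₁)
    simp [empty φ hφ₁, empty ψ hψ₁]

theorem mul_le_sq_of_add_le_two_mul {x y z : ℝ≥0∞} (h : x + y ≤ 2 * z) :
    x * y ≤ z ^ 2 := by
  rcases eq_or_ne z ∞ with rfl | hz
  · simp
  obtain ⟨hx, hy⟩ := ENNReal.add_ne_top.1 (ne_top_of_le_ne_top (by finiteness) h)
  lift x to ℝ≥0 using hx
  lift y to ℝ≥0 using hy
  lift z to ℝ≥0 using hz
  norm_cast at h ⊢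
  rw [← NNReal.coe_le_coe] at h ⊢
  push_cast at h ⊢
  nlinarith [sq_nonneg ((x : ℝ) - y), x.coe_nonneg, y.coe_nonneg]

theorem isLUB_range_inv_iSup_mul {ι : Sort*} {f : ι → ℝ≥0} (bdd : BddAbove (range f))
    (ne_zero : ⨆ i, f i ≠ 0) : IsLUB (range fun i => (⨆ i, f i)⁻¹ * f i) 1 := by
  have : Nonempty ι := not_isEmpty_iff.1 fun _ => ne_zero (by simp)
  have isLUB := (isLUB_ciSup bdd).mul_left (zero_le (a := (⨆ i, f i)⁻¹))
  rwa [← range_comp, inv_mul_cancel₀ ne_zero] at isLUB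

theorem lintegral_coe_inv_mul {α : Type*} [MeasurableSpace α] {μ : Measure α} {c : ℝ≥0}
    (hc : c ≠ 0) {f : α → ℝ≥0} (hf : Measurable f) :
    ∫⁻ x, ((c⁻¹ * f x : ℝ≥0) : ℝ≥0∞) ∂μ = (c : ℝ≥0∞)⁻¹ * ∫⁻ x, f x ∂μ := by
  simp_rw [ENNReal.coe_mul, ENNReal.coe_inv hc]
  exact lintegral_const_mul _ hf.coe_nnreal_ennreal

theorem lintegral_mul_lintegral_le_sq_of_bddAbove {φ ψ χ : ℝ → ℝ≥0} (hφ : Measurable φ)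
    (hψ : Measurable ψ) (hχ : Measurable χ) (bφ : BddAbove (range φ)) (bψ : BddAbove (range ψ))
    (h : ∀ p q, φ p * ψ q ≤ χ ((p + q) / 2) ^ 2) :
    (∫⁻ p, φ p) * ∫⁻ p, ψ p ≤ (∫⁻ p, χ p) ^ 2 := by
  set α := ⨆ p, φ p
  set β := ⨆ p, ψ p
  rcases eq_or_ne α 0 with hα₀ | hα₀
  · have φ_eq_zero : ∀ p, φ p = 0 := fun p => le_zero_iff.1 (hα₀ ▸ le_ciSup bφ p)
    simp [φ_eq_zero]
  rcases eq_or_ne β 0 with hβ₀ | hβ₀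
  · have ψ_eq_zero : ∀ p, ψ p = 0 := fun p => le_zero_iff.1 (hβ₀ ▸ le_ciSup bψ p)
    simp [ψ_eq_zero]
  set γ := NNReal.sqrt (α * β)
  have hγ : γ ^ 2 = α * β := NNReal.sq_sqrt _
  have hγ₀ : γ ≠ 0 := by simp [γ, hα₀, hβ₀]
  have normalized := lintegral_add_lintegral_le_two_mul_of_isLUB
    (φ := fun p => α⁻¹ * φ p) (ψ := fun p => β⁻¹ * ψ p) (χ := fun p => γ⁻¹ * χ p)
    (by fun_prop) (by fun_prop) (by fun_prop) (isLUB_range_inv_iSup_mul bφ hα₀)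
    (isLUB_range_inv_iSup_mul bψ hβ₀) fun p q => by
      calc α⁻¹ * φ p * (β⁻¹ * ψ q) = (γ ^ 2)⁻¹ * (φ p * ψ q) := by rw [hγ, mul_inv]; ring
        _ ≤ (γ ^ 2)⁻¹ * χ ((p + q) / 2) ^ 2 := by gcongr; exact h p q
        _ = (γ⁻¹ * χ ((p + q) / 2)) ^ 2 := by rw [mul_pow, inv_pow]
  rw [lintegral_coe_inv_mul hα₀ hφ, lintegral_coe_inv_mul hβ₀ hψ, lintegral_coe_inv_mul hγ₀ hχ]
    at normalized
  have product := mul_le_sq_of_add_le_two_mul normalized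
  have cancel : ∀ {c : ℝ≥0}, c ≠ 0 → (c : ℝ≥0∞) * (c : ℝ≥0∞)⁻¹ = 1 := fun hc =>
    ENNReal.mul_inv_cancel (ENNReal.coe_ne_zero.2 hc) ENNReal.coe_ne_top
  have coe_γ_sq : ((α : ℝ≥0∞) * β) = γ ^ 2 := by exact_mod_cast hγ.symm
  calc (∫⁻ p, (φ p : ℝ≥0∞)) * ∫⁻ p, (ψ p : ℝ≥0∞)
      = (α * (α : ℝ≥0∞)⁻¹) * (β * (β : ℝ≥0∞)⁻¹) * ((∫⁻ p, φ p) * ∫⁻ p, ψ p) := by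
        rw [cancel hα₀, cancel hβ₀, one_mul, one_mul]
    _ = γ ^ 2 * ((α : ℝ≥0∞)⁻¹ * (∫⁻ p, φ p) * ((β : ℝ≥0∞)⁻¹ * ∫⁻ p, ψ p)) := by
      rw [← coe_γ_sq]; ring
    _ ≤ γ ^ 2 * ((γ : ℝ≥0∞)⁻¹ * ∫⁻ p, χ p) ^ 2 := by gcongr
    _ = (γ * (γ : ℝ≥0∞)⁻¹) ^ 2 * (∫⁻ p, χ p) ^ 2 := by ring
    _ = (∫⁻ p, (χ p : ℝ≥0∞)) ^ 2 := by rw [cancel hγ₀, one_pow, one_mul]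

theorem lintegral_mul_le_of_monotone {α : Type*} [MeasurableSpace α] {μ : Measure α}
    {f : α → ℝ≥0∞} {F : ℕ → α → ℝ≥0∞} {I J : ℝ≥0∞} (hF : ∀ N, Measurable (F N)) (mono : Monotone F)
    (sup : ∀ x, ⨆ N, F N x = f x) (h : ∀ N, (∫⁻ x, F N x ∂μ) * I ≤ J) :
    (∫⁻ x, f x ∂μ) * I ≤ J := by
  simp_rw [← sup, lintegral_iSup hF mono, ENNReal.iSup_mul]
  exact iSup_le h

theorem iSup_min_natCast (a : ℝ≥0∞) : ⨆ N : ℕ, min a N = a := by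
  rw [← inf_iSup_eq, ENNReal.iSup_natCast, inf_top_eq]

theorem monotone_min_natCast {α : Type*} (f : α → ℝ≥0∞) : Monotone fun (N : ℕ) x => min (f x) N :=
  fun _ _ h _ => min_le_min le_rfl (Nat.cast_le.2 h)

theorem min_mul_min_le_sq_min_max {a b c : ℝ≥0∞} (h : a * b ≤ c ^ 2) (M N : ℝ≥0∞) :
    min a M * min b N ≤ min c (max M N) ^ 2 := by
  rcases le_total c (max M N) with hc | hc
  · rw [min_eq_left hc]
    exact (mul_le_mul' (min_le_left _ _) (min_le_left _ _)).trans h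
  · rw [min_eq_right hc, sq]
    exact mul_le_mul' ((min_le_right _ _).trans (le_max_left _ _))
      ((min_le_right _ _).trans (le_max_right _ _))

theorem coe_toNNReal_min_natCast (a : ℝ≥0∞) (N : ℕ) :
    ((min a N).toNNReal : ℝ≥0∞) = min a N :=
  ENNReal.coe_toNNReal (ne_top_of_le_ne_top (ENNReal.natCast_ne_top N) (min_le_right _ _))

theorem bddAbove_range_toNNReal_min_natCast {α : Type*} (f : α → ℝ≥0∞) (N : ℕ) :
    BddAbove (range fun x => (min (f x) N).toNNReal) :=
  ⟨N, forall_mem_range.2 fun _ =>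
    ENNReal.toNNReal_mono (ENNReal.natCast_ne_top N) (min_le_right _ _)⟩

theorem prekopa_leindler_midpoint {φ ψ χ : ℝ → ℝ≥0∞} (hφ : Measurable φ) (hψ : Measurable ψ)
    (hχ : Measurable χ) (h : ∀ p q, φ p * ψ q ≤ χ ((p + q) / 2) ^ 2) :
    (∫⁻ p, φ p) * ∫⁻ p, ψ p ≤ (∫⁻ p, χ p) ^ 2 := by
  refine lintegral_mul_le_of_monotone (fun M => by fun_prop) (monotone_min_natCast φ)
    (fun p => iSup_min_natCast _) fun M => ?_
  rw [mul_comm]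
  refine lintegral_mul_le_of_monotone (fun N => by fun_prop) (monotone_min_natCast ψ)
    (fun p => iSup_min_natCast _) fun N => ?_
  have bounded := lintegral_mul_lintegral_le_sq_of_bddAbove
    (χ := fun p => (min (χ p) (max M N : ℕ)).toNNReal)
    (by fun_prop) (by fun_prop) (by fun_prop) (bddAbove_range_toNNReal_min_natCast φ M)
    (bddAbove_range_toNNReal_min_natCast ψ N) fun p q => by
      rw [← ENNReal.coe_le_coe, ENNReal.coe_mul, ENNReal.coe_pow]
      simp only [coe_toNNReal_min_natCast]
      rw [Nat.mono_cast.map_max]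
      exact min_mul_min_le_sq_min_max (h p q) M N
  simp only [coe_toNNReal_min_natCast] at bounded
  rw [mul_comm]
  refine bounded.trans ?_
  gcongr
  exact min_le_left _ _

theorem lintegral_Ioi_eq_lintegral_exp (f : ℝ → ℝ≥0∞) :
    ∫⁻ s in Ioi (0 : ℝ), f s = ∫⁻ p : ℝ, ENNReal.ofReal (Real.exp p) * f (Real.exp p) := by
  have := lintegral_image_eq_lintegral_abs_deriv_mul MeasurableSet.univ
    (fun x _ => (Real.hasDerivAt_exp x).hasDerivWithinAt) Real.exp_injective.injOn f
  simpa only [image_univ, Real.range_exp, Real.abs_exp, setLIntegral_univ] using this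

theorem lintegral_Ioi_gaussian :
    ∫⁻ s in Ioi (0 : ℝ), ENNReal.ofReal (Real.exp (-s ^ 2 / 2)) =
      ENNReal.ofReal √(Real.pi / 2) := by
  have exponent : ∀ s : ℝ, -s ^ 2 / 2 = -(1 / 2) * s ^ 2 := fun s => by ring
  have integral : ∫ s in Ioi (0 : ℝ), Real.exp (-(1 / 2) * s ^ 2) = √(Real.pi / 2) := by
    rw [integral_gaussian_Ioi, eq_comm,
      Real.sqrt_eq_iff_mul_self_eq (by positivity) (by positivity), div_mul_div_comm,
      Real.mul_self_sqrt (by positivity)]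
    ring
  simp_rw [exponent]
  rw [← integral, ofReal_integral_eq_lintegral_ofReal
    (integrable_exp_neg_mul_sq (by norm_num)).integrableOn
    (.of_forall fun s => (Real.exp_pos _).le)]

theorem lintegral_Ioi_mul_lintegral_Ioi_le {f g : ℝ → ℝ≥0∞} (hf : Measurable f) (hg : Measurable g)
    {C : ℝ≥0∞} (h : ∀ s > 0, ∀ t > 0, f s * g t ≤ C * ENNReal.ofReal (Real.exp (-(s * t)))) :
    (∫⁻ s in Ioi (0 : ℝ), f s) * (∫⁻ t in Ioi (0 : ℝ), g t) ≤
      C * ENNReal.ofReal (Real.pi / 2) := by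
  have sqrt_sq : (C ^ (1 / 2 : ℝ)) ^ 2 = C := by
    rw [← ENNReal.rpow_mul_natCast, Nat.cast_ofNat, one_div_mul_cancel two_ne_zero,
      ENNReal.rpow_one]
  set γ : ℝ → ℝ≥0∞ := fun s => C ^ (1 / 2 : ℝ) * ENNReal.ofReal (Real.exp (-s ^ 2 / 2))
  have γ_sq : ∀ s, γ s ^ 2 = C * ENNReal.ofReal (Real.exp (-s ^ 2)) := fun s => by
    rw [mul_pow, sqrt_sq, ← ENNReal.ofReal_pow (by positivity), ← Real.exp_nat_mul, Nat.cast_ofNat,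
      mul_div_cancel₀ _ two_ne_zero]
  have exp_mid : ∀ p q : ℝ, Real.exp ((p + q) / 2) ^ 2 = Real.exp p * Real.exp q := fun p q => by
    rw [← Real.exp_nat_mul, ← Real.exp_add, Nat.cast_ofNat, mul_div_cancel₀ _ two_ne_zero]
  rw [lintegral_Ioi_eq_lintegral_exp f, lintegral_Ioi_eq_lintegral_exp g]
  refine (prekopa_leindler_midpoint (χ := fun p => ENNReal.ofReal (Real.exp p) * γ (Real.exp p))
    (by fun_prop) (by fun_prop) (by fun_prop) fun p q => ?_).trans_eq ?_
  · calc ENNReal.ofReal (Real.exp p) * f (Real.exp p) *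
          (ENNReal.ofReal (Real.exp q) * g (Real.exp q))
        = ENNReal.ofReal (Real.exp p) * ENNReal.ofReal (Real.exp q) *
          (f (Real.exp p) * g (Real.exp q)) := by ring
      _ ≤ ENNReal.ofReal (Real.exp p) * ENNReal.ofReal (Real.exp q) *
          (C * ENNReal.ofReal (Real.exp (-(Real.exp p * Real.exp q)))) :=
        mul_le_mul_right (h _ (Real.exp_pos p) _ (Real.exp_pos q)) _
      _ = _ := by
        rw [← exp_mid p q, mul_pow, γ_sq, ← ENNReal.ofReal_pow (by positivity),
          ← ENNReal.ofReal_mul (by positivity), ← exp_mid p q]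
  · rw [← lintegral_Ioi_eq_lintegral_exp, lintegral_const_mul _ (by fun_prop),
      lintegral_Ioi_gaussian, mul_pow, sqrt_sq, ← ENNReal.ofReal_pow (by positivity),
      Real.sq_sqrt (by positivity)]

theorem lintegral_Iio_mul_lintegral_Iio_le {f g : ℝ → ℝ≥0∞} (hf : Measurable f) (hg : Measurable g)
    {C : ℝ≥0∞} (h : ∀ s < 0, ∀ t < 0, f s * g t ≤ C * ENNReal.ofReal (Real.exp (-(s * t)))) :
    (∫⁻ s in Iio (0 : ℝ), f s) * (∫⁻ t in Iio (0 : ℝ), g t) ≤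
      C * ENNReal.ofReal (Real.pi / 2) := by
  have reflect : ∀ {k : ℝ → ℝ≥0∞}, Measurable k →
      ∫⁻ s in Iio (0 : ℝ), k s = ∫⁻ s in Ioi (0 : ℝ), k (-s) := fun hk => by
    have := (Measure.measurePreserving_neg volume).setLIntegral_comp_preimage
      (measurableSet_Iio (a := (0 : ℝ))) hk
    simpa using this.symm
  rw [reflect hf, reflect hg]
  refine lintegral_Ioi_mul_lintegral_Ioi_le (by fun_prop) (by fun_prop) fun s hs t ht => ?_
  simpa using h (-s) (by simpa) (-t) (by simpa)

/-! ### Centered and balanced measures -/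

section Centered

variable {V : Type*} [NormedAddCommGroup V] [NormedSpace ℝ V] [MeasurableSpace V]

/-- A finite measure with a finite first moment whose barycenter is the origin. -/
structure IsCentered (μ : Measure V) : Prop where
  isFiniteMeasure : IsFiniteMeasure μ
  integrable : Integrable (fun x => x) μ
  integral_eq_zero : ∫ x, x ∂μ = 0

theorem isCentered_map [BorelSpace V] [SecondCountableTopology V] {Ω : Type*} [MeasurableSpace Ω]
    {μ : Measure Ω} [IsFiniteMeasure μ] {T : Ω → V} (hT : Measurable T)
    (integrable : Integrable T μ) (integral : ∫ p, T p ∂μ = 0) : IsCentered (μ.map T) where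
  isFiniteMeasure := inferInstance
  integrable := (integrable_map_measure aestronglyMeasurable_id hT.aemeasurable).2 integrable
  integral_eq_zero := (integral_map hT.aemeasurable aestronglyMeasurable_id).trans integral

theorem IsCentered.map [BorelSpace V] [CompleteSpace V] {W : Type*} [NormedAddCommGroup W]
    [NormedSpace ℝ W] [CompleteSpace W] [MeasurableSpace W] [BorelSpace W]
    [SecondCountableTopology W] {μ : Measure V} (hμ : IsCentered μ) (L : V →L[ℝ] W) :
    IsCentered (μ.map L) := by
  have := hμ.isFiniteMeasure
  refine isCentered_map L.measurable (L.integrable_comp hμ.integrable) ?_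
  rw [L.integral_comp_comm hμ.integrable, hμ.integral_eq_zero, map_zero]

theorem IsCentered.measure_univ_le_lintegral_exp [CompleteSpace V] {μ : Measure V}
    (hμ : IsCentered μ) (ℓ : V →L[ℝ] ℝ) : μ univ ≤ ∫⁻ y, ENNReal.ofReal (Real.exp (ℓ y)) ∂μ := by
  have := hμ.isFiniteMeasure
  have integrable : Integrable ℓ μ := ℓ.integrable_comp hμ.integrable
  have integrable_add : Integrable (fun y => ℓ y + 1) μ := integrable.add (integrable_const 1)
  have integral : ∫ y, (ℓ y + 1) ∂μ = μ.real univ := by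
    rw [integral_add integrable (integrable_const 1), ℓ.integral_comp_comm hμ.integrable,
      hμ.integral_eq_zero]
    simp
  calc μ univ = ENNReal.ofReal (∫ y, (ℓ y + 1) ∂μ) := by rw [integral, ofReal_measureReal]
    _ ≤ ∫⁻ y, ENNReal.ofReal (ℓ y + 1) ∂μ := by
      refine ENNReal.ofReal_le_of_le_toReal ?_
      rw [integral_eq_lintegral_pos_part_sub_lintegral_neg_part integrable_add]
      exact sub_le_self _ ENNReal.toReal_nonneg
    _ ≤ ∫⁻ y, ENNReal.ofReal (Real.exp (ℓ y)) ∂μ :=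
      lintegral_mono fun y => ENNReal.ofReal_le_ofReal (Real.add_one_le_exp _)

theorem IsCentered.lintegral_le_lintegral_mul_exp [CompleteSpace V] [OpensMeasurableSpace V]
    {μ : Measure V} {g : V → ℝ≥0∞} (hg : Measurable g) (centered : IsCentered (μ.withDensity g))
    (ℓ : V →L[ℝ] ℝ) : ∫⁻ y, g y ∂μ ≤ ∫⁻ y, g y * ENNReal.ofReal (Real.exp (ℓ y)) ∂μ := by
  have := centered.measure_univ_le_lintegral_exp ℓ
  rwa [withDensity_apply _ .univ, setLIntegral_univ, lintegral_withDensity_eq_lintegral_mul _ hg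
    (g := fun y => ENNReal.ofReal (Real.exp (ℓ y))) (by fun_prop)] at this

/-- A measure on `ℝ × V` is balanced if the hyperplane `{0} × V` halves it and the projections to
`V` of the two halves are centered. -/
structure IsBalanced (μ : Measure (ℝ × V)) : Prop where
  measure_eq : μ (Ioi 0 ×ˢ univ) = μ (Iio 0 ×ˢ univ)
  isCentered_pos : IsCentered ((μ.restrict (Ioi 0 ×ˢ univ)).map Prod.snd)
  isCentered_neg : IsCentered ((μ.restrict (Iio 0 ×ˢ univ)).map Prod.snd)

end Centered

theorem exists_measure_Iio_eq_measure_Ioi (ρ : Measure ℝ) [IsFiniteMeasure ρ]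
    [NullSingletonClass ρ] : ∃ a, ρ (Iio a) = ρ (Ioi a) := by
  have continuous : Continuous fun b => ρ.real (Iic b) := by
    have primitive := intervalIntegral.continuous_primitive (μ := ρ) (f := fun _ => (1 : ℝ))
      (fun a b => intervalIntegrable_const) 0
    refine (continuous_const.add primitive).congr (f := fun b => ρ.real (Iic 0) + _) fun b => ?_
    rw [← intervalIntegral.integral_Iic_sub_Iic (integrable_const _).integrableOn
      (integrable_const _).integrableOn]
    simp
  have atTop : Tendsto (fun b => ρ.real (Iic b)) atTop (𝓝 (ρ.real univ)) :=
    (ENNReal.tendsto_toReal (measure_ne_top _ _)).comp (tendsto_measure_Iic_atTop ρ)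
  have atBot : Tendsto (fun b => ρ.real (Iic b)) atBot (𝓝 0) := by
    have : ∀ b, ρ.real (Iic b) = ρ.real univ - ρ.real (Ici b) := fun b => by
      rw [← measureReal_compl measurableSet_Ici, compl_Ici, measureReal_congr Iio_ae_eq_Iic]
    simp_rw [this]
    rw [← sub_self (ρ.real univ)]
    exact tendsto_const_nhds.sub
      ((ENNReal.tendsto_toReal (measure_ne_top _ _)).comp (tendsto_measure_Ici_atBot ρ))
  rcases eq_or_ne ρ 0 with rfl | hρ
  · exact ⟨0, rfl⟩
  have : NeZero ρ := ⟨hρ⟩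
  have pos : 0 < ρ.real univ := measureReal_univ_pos
  obtain ⟨a, ha⟩ := mem_range_of_exists_le_of_exists_ge continuous
    ((atBot.eventually_le_const (half_pos pos)).exists)
    ((atTop.eventually_const_le (half_lt_self pos)).exists)
  refine ⟨a, (measureReal_eq_measureReal_iff).1 ?_⟩
  have compl := measureReal_add_measureReal_compl (μ := ρ) (s := Iic a) measurableSet_Iic
  rw [compl_Iic] at compl
  rw [measureReal_congr (Iio_ae_eq_Iic (μ := ρ))]
  linarith

section Balancing

variable {V : Type*} [NormedAddCommGroup V] [NormedSpace ℝ V]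

/-- The affine map of `ℝ × V` that sends the graph of `s ↦ z + (s - a) • w` to the line `ℝ × {0}`
and the hyperplane `{a} × V` to the hyperplane `{0} × V`. -/
def shear (a : ℝ) (z w : V) (p : ℝ × V) : ℝ × V := (p.1 - a, p.2 - z - (p.1 - a) • w)

theorem shear_preimage_prod_univ (a : ℝ) (z w : V) (S : Set ℝ) :
    shear a z w ⁻¹' (S ×ˢ univ) = ((· - a) ⁻¹' S) ×ˢ univ := by
  ext p
  simp [shear]

/-- The inverse of `shear`. -/
def unshear (a : ℝ) (z w : V) (p : ℝ × V) : ℝ × V := (p.1 + a, p.2 + z + p.1 • w)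

theorem unshear_shear (a : ℝ) (z w : V) (p : ℝ × V) : unshear a z w (shear a z w p) = p := by
  ext <;> simp only [unshear, shear] <;> module

theorem exists_smul_add_smul_eq {m c₁ c₂ : ℝ} (hm : m ≠ 0) (hc : c₁ ≠ c₂) (b₁ b₂ : V) :
    ∃ z w : V, m • z + c₁ • w = b₁ ∧ m • z + c₂ • w = b₂ := by
  have hc' : c₁ - c₂ ≠ 0 := sub_ne_zero.2 hc
  set w := (c₁ - c₂)⁻¹ • (b₁ - b₂)
  have hw : (c₁ - c₂) • w = b₁ - b₂ := smul_inv_smul₀ hc' _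
  refine ⟨m⁻¹ • (b₁ - c₁ • w), w, ?_, ?_⟩
  · rw [smul_inv_smul₀ hm, sub_add_cancel]
  · rw [smul_inv_smul₀ hm, ← sub_sub_cancel b₁ b₂, ← hw, sub_smul]
    abel

variable [MeasurableSpace V]

theorem setIntegral_fst_sub_lt {μ : Measure (ℝ × V)} [IsFiniteMeasure μ]
    (hμ : Integrable (fun p => p) μ) {a : ℝ} (ha : μ.real (Ioi a ×ˢ univ) ≠ 0) :
    ∫ p in Iio a ×ˢ univ, (p.1 - a) ∂μ < ∫ p in Ioi a ×ˢ univ, (p.1 - a) ∂μ := by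
  have integrable := hμ.fst.sub (integrable_const a)
  have measurableSet : MeasurableSet (Ioi a ×ˢ (univ : Set V)) := measurableSet_Ioi.prod .univ
  have nonpos : ∫ p in Iio a ×ˢ univ, (p.1 - a) ∂μ ≤ 0 :=
    setIntegral_nonpos (measurableSet_Iio.prod .univ) fun p hp => sub_nonpos.2 hp.1.le
  refine nonpos.trans_lt ((setIntegral_pos_iff_support_of_nonneg_ae
    (ae_restrict_of_forall_mem measurableSet fun p hp => sub_nonneg.2 hp.1.le)
    integrable.integrableOn).2 ?_)
  have subset : Ioi a ×ˢ univ ⊆ Function.support fun p : ℝ × V => p.1 - a := fun p hp =>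
    (sub_pos.2 hp.1).ne'
  rw [inter_eq_right.2 subset]
  exact pos_iff_ne_zero.2 fun null => ha (by simp [measureReal_def, null])

variable [BorelSpace V] [SecondCountableTopology V]

@[fun_prop]
theorem measurable_shear (a : ℝ) (z w : V) : Measurable (shear a z w) := by
  unfold shear
  fun_prop

@[fun_prop]
theorem measurable_unshear (a : ℝ) (z w : V) : Measurable (unshear a z w) := by
  unfold unshear
  fun_prop

theorem isCentered_map_restrict_shear [CompleteSpace V] {μ : Measure (ℝ × V)} [IsFiniteMeasure μ]
    (hμ : Integrable (fun p => p) μ) (a : ℝ) {z w : V} {S : Set ℝ} (hS : MeasurableSet S)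
    (h : μ.real (((· - a) ⁻¹' S) ×ˢ univ) • z + (∫ p in ((· - a) ⁻¹' S) ×ˢ univ, (p.1 - a) ∂μ) • w =
      ∫ p in ((· - a) ⁻¹' S) ×ˢ univ, p.2 ∂μ) :
    IsCentered (((μ.map (shear a z w)).restrict (S ×ˢ univ)).map Prod.snd) := by
  have integrable_fst : Integrable (fun p : ℝ × V => p.1 - a)
      (μ.restrict (((· - a) ⁻¹' S) ×ˢ univ)) := (hμ.fst.sub (integrable_const a)).restrict
  have integrable_snd : Integrable (fun p : ℝ × V => p.2 - z)
      (μ.restrict (((· - a) ⁻¹' S) ×ˢ univ)) := (hμ.snd.sub (integrable_const z)).restrict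
  rw [Measure.restrict_map (measurable_shear a z w) (hS.prod .univ), shear_preimage_prod_univ,
    Measure.map_map measurable_snd (measurable_shear a z w)]
  refine isCentered_map (by fun_prop) (integrable_snd.sub (integrable_fst.smul_const w)) ?_
  simp only [Function.comp_def, shear]
  rw [integral_sub integrable_snd (integrable_fst.smul_const w),
    integral_sub hμ.snd.restrict (integrable_const z), integral_smul_const, ← h, setIntegral_const,
    add_sub_cancel_left, sub_self]

theorem exists_isBalanced_map_shear [CompleteSpace V] (μ : Measure (ℝ × V)) [IsFiniteMeasure μ]
    [NullSingletonClass (μ.map Prod.fst)] (hμ : Integrable (fun p => p) μ) :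
    ∃ a z w, IsBalanced (μ.map (shear a z w)) := by
  obtain ⟨a, ha⟩ := exists_measure_Iio_eq_measure_Ioi (μ.map Prod.fst)
  rw [Measure.map_apply measurable_fst measurableSet_Iio,
    Measure.map_apply measurable_fst measurableSet_Ioi, ← prod_univ, ← prod_univ] at ha
  have preimage_Ioi : (· - a) ⁻¹' Ioi 0 = Ioi a := by simp
  have preimage_Iio : (· - a) ⁻¹' Iio 0 = Iio a := by simp
  have halves : μ.real (Iio a ×ˢ univ) = μ.real (Ioi a ×ˢ univ) := congrArg ENNReal.toReal ha
  set m := μ.real (Ioi a ×ˢ univ)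
  obtain ⟨z, w, pos, neg⟩ : ∃ z w : V,
      m • z + (∫ p in Ioi a ×ˢ univ, (p.1 - a) ∂μ) • w = ∫ p in Ioi a ×ˢ univ, p.2 ∂μ ∧
      m • z + (∫ p in Iio a ×ˢ univ, (p.1 - a) ∂μ) • w = ∫ p in Iio a ×ˢ univ, p.2 ∂μ := by
    rcases eq_or_ne m 0 with hm₀ | hm₀
    · have null_pos : μ (Ioi a ×ˢ univ) = 0 := (measureReal_eq_zero_iff).1 hm₀
      exact ⟨0, 0, by simp [setIntegral_measure_zero _ null_pos],
        by simp [setIntegral_measure_zero _ (ha.trans null_pos)]⟩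
    · exact exists_smul_add_smul_eq hm₀ (setIntegral_fst_sub_lt hμ hm₀).ne' _ _
  refine ⟨a, z, w, ?_, ?_, ?_⟩
  · rw [Measure.map_apply (by fun_prop) (measurableSet_Ioi.prod .univ),
      Measure.map_apply (by fun_prop) (measurableSet_Iio.prod .univ), shear_preimage_prod_univ,
      shear_preimage_prod_univ, preimage_Ioi, preimage_Iio, ha]
  · refine isCentered_map_restrict_shear hμ a measurableSet_Ioi ?_
    rwa [preimage_Ioi]
  · refine isCentered_map_restrict_shear hμ a measurableSet_Iio ?_
    rwa [preimage_Iio, halves]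

end Balancing

/-! ### The functional Santaló inequality -/

theorem map_withDensity_comp_of_measurePreserving {α β : Type*} [MeasurableSpace α]
    [MeasurableSpace β] {μ : Measure α} {ν : Measure β} {T : α → β} (hT : MeasurePreserving T μ ν)
    {f : β → ℝ≥0∞} (hf : Measurable f) : (μ.withDensity (f ∘ T)).map T = ν.withDensity f := by
  ext s hs
  rw [Measure.map_apply hT.measurable hs, withDensity_apply _ (hT.measurable hs),
    withDensity_apply _ hs]
  exact hT.setLIntegral_comp_preimage hs hf

theorem map_snd_withDensity_prod {α β : Type*} [MeasurableSpace α] [MeasurableSpace β]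
    {μ : Measure α} {ν : Measure β} [SFinite μ] [SFinite ν] {f : α × β → ℝ≥0∞}
    (hf : Measurable f) :
    ((μ.prod ν).withDensity f).map Prod.snd = ν.withDensity fun y => ∫⁻ x, f (x, y) ∂μ := by
  refine Measure.ext_of_lintegral _ fun φ hφ => ?_
  rw [lintegral_map hφ measurable_snd,
    lintegral_withDensity_eq_lintegral_mul _ hf (g := fun p => φ p.2) (by fun_prop),
    lintegral_withDensity_eq_lintegral_mul _ hf.lintegral_prod_left' hφ,
    lintegral_prod_symm' _ (by fun_prop)]
  refine lintegral_congr fun y => ?_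
  exact lintegral_mul_const (φ y) (f := fun x => f (x, y)) (by fun_prop)

theorem nullSingletonClass_map_fst_withDensity {α β : Type*} [MeasurableSpace α]
    [MeasurableSingletonClass α] [MeasurableSpace β] {μ : Measure α} [NullSingletonClass μ]
    {ν : Measure β} [SFinite ν] (f : α × β → ℝ≥0∞) :
    NullSingletonClass (((μ.prod ν).withDensity f).map Prod.fst) where
  measure_singleton a := by
    rw [Measure.map_apply measurable_fst (measurableSet_singleton a), ← prod_univ]
    exact withDensity_absolutelyContinuous _ f (by simp)

section Truncation

variable {V : Type*} [NormedAddCommGroup V]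

/-- The truncation of `f` at height `N` and to the ball of radius `N`. -/
def truncation (f : V → ℝ≥0∞) (N : ℕ) : V → ℝ≥0∞ :=
  (Metric.closedBall 0 (N : ℝ)).indicator fun x => min (f x) N

theorem truncation_le (f : V → ℝ≥0∞) (N : ℕ) (x : V) : truncation f N x ≤ f x :=
  (indicator_le_self _ _ x).trans (min_le_left _ _)

theorem monotone_truncation (f : V → ℝ≥0∞) : Monotone (truncation f) := fun M N hMN x =>
  (indicator_le_indicator_of_subset
    (Metric.closedBall_subset_closedBall (by exact_mod_cast hMN)) (fun _ => zero_le) x).trans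
    (indicator_le_indicator (monotone_min_natCast f hMN x))

theorem iSup_truncation (f : V → ℝ≥0∞) (x : V) : ⨆ N, truncation f N x = f x := by
  refine le_antisymm (iSup_le fun N => truncation_le f N x) ?_
  obtain ⟨R, hR⟩ := exists_nat_ge ‖x‖
  rw [← iSup_min_natCast (f x)]
  refine iSup_le fun N => le_iSup_of_le (max N R) ?_
  have mem : x ∈ Metric.closedBall 0 ((max N R : ℕ) : ℝ) := by
    rw [mem_closedBall_zero_iff]
    exact hR.trans (by gcongr; exact le_max_right _ _)
  rw [truncation, indicator_of_mem mem]
  exact monotone_min_natCast f (le_max_left _ _) x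

variable [MeasurableSpace V] [BorelSpace V]

theorem measurable_truncation {f : V → ℝ≥0∞} (hf : Measurable f) (N : ℕ) :
    Measurable (truncation f N) :=
  (hf.min measurable_const).indicator measurableSet_closedBall

theorem isFiniteMeasure_withDensity_truncation [ProperSpace V] (μ : Measure V)
    [IsFiniteMeasureOnCompacts μ] (f : V → ℝ≥0∞) (N : ℕ) :
    IsFiniteMeasure (μ.withDensity (truncation f N)) := by
  refine isFiniteMeasure_withDensity
    (ne_top_of_le_ne_top (b := N * μ (Metric.closedBall 0 N)) ?_ ?_)
  · exact ENNReal.mul_ne_top (by simp) measure_closedBall_lt_top.ne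
  · rw [truncation, lintegral_indicator measurableSet_closedBall, ← setLIntegral_const]
    exact lintegral_mono fun x => min_le_right _ _

theorem integrable_withDensity_truncation [ProperSpace V] (μ : Measure V)
    [IsFiniteMeasureOnCompacts μ] {f : V → ℝ≥0∞} (hf : Measurable f) (N : ℕ) :
    Integrable (fun x => x) (μ.withDensity (truncation f N)) := by
  have := isFiniteMeasure_withDensity_truncation μ f N
  refine Integrable.of_bound aestronglyMeasurable_id N ?_
  rw [ae_withDensity_iff (measurable_truncation hf N)]
  refine .of_forall fun x hx => mem_closedBall_zero_iff.1 ?_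
  exact mem_of_indicator_ne_zero hx

end Truncation

section FunctionalSantalo

variable {E : Type*} [NormedAddCommGroup E] [InnerProductSpace ℝ E]

/-- The inverse adjoint of the linear part of `shear a z w`, so that the two together preserve the
inner product of `ℝ × E`. -/
def dualShear (w : E) (q : ℝ × E) : ℝ × E := (q.1 - ⟪w, q.2⟫, q.2)

theorem pairing_unshear_dualShear (a : ℝ) (z w : E) (p q : ℝ × E) :
    (unshear a z w p).1 * (dualShear w q).1 + ⟪(unshear a z w p).2, (dualShear w q).2⟫ =
      p.1 * q.1 + ⟪p.2, q.2⟫ + (a * (dualShear w q).1 + ⟪z, (dualShear w q).2⟫) := by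
  simp only [unshear, dualShear, inner_add_left, real_inner_smul_left]
  ring

variable [FiniteDimensional ℝ E] [MeasurableSpace E] [BorelSpace E]

variable (E) in
/-- The functional Santaló inequality on `E`, for pairs of functions of which the second has its
barycenter at the origin. The constant `C` makes the inequality homogeneous. -/
def FunctionalSantalo : Prop :=
  ∀ (C : ℝ≥0∞) (f g : E → ℝ≥0∞), Measurable f → Measurable g → IsCentered (volume.withDensity g) →
    (∀ x y, f x * g y ≤ C * ENNReal.ofReal (Real.exp (-⟪x, y⟫))) →
    (∫⁻ x, f x) * ∫⁻ y, g y ≤ C * ENNReal.ofReal (2 * Real.pi) ^ finrank ℝ E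

theorem FunctionalSantalo.setLIntegral_prod_univ_le (hE : FunctionalSantalo E) {S : Set ℝ}
    (hS : MeasurableSet S) {c : ℝ≥0∞}
    (line : ∀ {C : ℝ≥0∞} {φ ψ : ℝ → ℝ≥0∞}, Measurable φ → Measurable ψ →
      (∀ s ∈ S, ∀ t ∈ S, φ s * ψ t ≤ C * ENNReal.ofReal (Real.exp (-(s * t)))) →
      (∫⁻ s in S, φ s) * (∫⁻ t in S, ψ t) ≤ C * c)
    {C : ℝ≥0∞} {f g : ℝ × E → ℝ≥0∞} (hf : Measurable f) (hg : Measurable g)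
    (centered : IsCentered (((volume.withDensity f).restrict (S ×ˢ univ)).map Prod.snd))
    (h : ∀ s ∈ S, ∀ t ∈ S, ∀ x y,
      f (s, x) * g (t, y) ≤ C * ENNReal.ofReal (Real.exp (-(s * t + ⟪x, y⟫)))) :
    (∫⁻ p in S ×ˢ univ, f p) * (∫⁻ p in S ×ˢ univ, g p) ≤
      C * c * ENNReal.ofReal (2 * Real.pi) ^ finrank ℝ E := by
  have volume_restrict : (volume : Measure (ℝ × E)).restrict (S ×ˢ univ) =
      (volume.restrict S).prod volume := by
    rw [Measure.volume_eq_prod, ← Measure.prod_restrict, Measure.restrict_univ]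
  rw [restrict_withDensity (hS.prod .univ), volume_restrict, map_snd_withDensity_prod hf]
    at centered
  rw [volume_restrict, lintegral_prod_symm' f hf, lintegral_prod_symm' g hg, mul_comm]
  refine hE _ _ _ hg.lintegral_prod_left' hf.lintegral_prod_left' centered fun x y => ?_
  have slice := line (C := C * ENNReal.ofReal (Real.exp (-⟪x, y⟫))) (φ := fun s => f (s, y))
    (ψ := fun t => g (t, x)) (by fun_prop) (by fun_prop) fun s hs t ht => ?_
  · rw [mul_comm]
    exact slice.trans_eq (by ring)
  · rw [mul_assoc, ← ENNReal.ofReal_mul (Real.exp_pos _).le, ← Real.exp_add, ← neg_add_rev,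
      real_inner_comm]
    exact h s hs t ht y x

theorem FunctionalSantalo.lintegral_prod_le_of_isBalanced (hE : FunctionalSantalo E)
    {C : ℝ≥0∞} {f g : ℝ × E → ℝ≥0∞} (hf : Measurable f) (hg : Measurable g)
    (balanced : IsBalanced (volume.withDensity f))
    (h : ∀ p q, f p * g q ≤ C * ENNReal.ofReal (Real.exp (-(p.1 * q.1 + ⟪p.2, q.2⟫)))) :
    (∫⁻ p, f p) * ∫⁻ q, g q ≤ C * ENNReal.ofReal (2 * Real.pi) ^ (finrank ℝ E + 1) := by
  have split : ∀ k : ℝ × E → ℝ≥0∞,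
      ∫⁻ p, k p = (∫⁻ p in Ioi 0 ×ˢ univ, k p) + ∫⁻ p in Iio 0 ×ˢ univ, k p := fun k => by
    have compl_ae_eq : ((Ioi 0 ×ˢ univ)ᶜ : Set (ℝ × E)) =ᵐ[volume] Iio 0 ×ˢ univ := by
      rw [compl_prod_eq_union, compl_univ, prod_empty, union_empty, compl_Ioi]
      exact Measure.set_prod_ae_eq Iio_ae_eq_Iic.symm .rfl
    rw [← lintegral_add_compl k (measurableSet_Ioi.prod .univ), setLIntegral_congr compl_ae_eq]
  have pos := hE.setLIntegral_prod_univ_le measurableSet_Ioi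
    (fun hφ hψ hφψ => lintegral_Ioi_mul_lintegral_Ioi_le hφ hψ hφψ)
    hf hg balanced.isCentered_pos fun s _ t _ x y => h (s, x) (t, y)
  have neg := hE.setLIntegral_prod_univ_le measurableSet_Iio
    (fun hφ hψ hφψ => lintegral_Iio_mul_lintegral_Iio_le hφ hψ hφψ)
    hf hg balanced.isCentered_neg fun s _ t _ x y => h (s, x) (t, y)
  have halves := balanced.measure_eq
  rw [withDensity_apply _ (measurableSet_Ioi.prod .univ),
    withDensity_apply _ (measurableSet_Iio.prod .univ)] at halves
  have four : ENNReal.ofReal (2 * Real.pi) = 4 * ENNReal.ofReal (Real.pi / 2) := by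
    rw [← ENNReal.ofReal_ofNat, ← ENNReal.ofReal_mul (by norm_num)]
    ring_nf
  rw [split f, split g, ← halves]
  rw [← halves] at neg
  calc _ = 2 * ((∫⁻ p in Ioi 0 ×ˢ univ, f p) * (∫⁻ p in Ioi 0 ×ˢ univ, g p) +
        (∫⁻ p in Ioi 0 ×ˢ univ, f p) * (∫⁻ p in Iio 0 ×ˢ univ, g p)) := by ring
    _ ≤ 2 * (C * ENNReal.ofReal (Real.pi / 2) * ENNReal.ofReal (2 * Real.pi) ^ finrank ℝ E +
        C * ENNReal.ofReal (Real.pi / 2) * ENNReal.ofReal (2 * Real.pi) ^ finrank ℝ E) := by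
      gcongr
    _ = _ := by rw [pow_succ, four]; ring

theorem measurePreserving_shear (a : ℝ) (z w : E) : MeasurePreserving (shear a z w) := by
  refine (measurePreserving_sub_right volume a).skew_product (g := fun s y => y - z - (s - a) • w)
    (by fun_prop) (.of_forall fun s => ?_)
  simp_rw [sub_sub]
  exact map_sub_right_eq_self volume _

theorem measurePreserving_dualShear (w : E) : MeasurePreserving (dualShear w) := by
  have swapped : MeasurePreserving (fun p : E × ℝ => (p.1, p.2 - ⟪w, p.1⟫)) :=
    (MeasurePreserving.id volume).skew_product (g := fun y s => s - ⟪w, y⟫) (by fun_prop)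
      (.of_forall fun y => map_sub_right_eq_self volume _)
  exact (Measure.measurePreserving_swap.comp swapped).comp Measure.measurePreserving_swap

theorem FunctionalSantalo.lintegral_prod_le_of_isBalanced_map_shear (hE : FunctionalSantalo E)
    {C : ℝ≥0∞} {f g : ℝ × E → ℝ≥0∞} (hf : Measurable f) (hg : Measurable g) {a : ℝ} {z w : E}
    (balanced : IsBalanced ((volume.withDensity f).map (shear a z w)))
    (centered : IsCentered (volume.withDensity g))
    (h : ∀ p q, f p * g q ≤ C * ENNReal.ofReal (Real.exp (-(p.1 * q.1 + ⟪p.2, q.2⟫)))) :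
    (∫⁻ p, f p) * ∫⁻ q, g q ≤ C * ENNReal.ofReal (2 * Real.pi) ^ (finrank ℝ E + 1) := by
  let ℓ : ℝ × E →L[ℝ] ℝ := a • ContinuousLinearMap.fst ℝ ℝ E +
    (innerSL ℝ z).comp (ContinuousLinearMap.snd ℝ ℝ E)
  have ℓ_apply : ∀ q, ℓ q = a * q.1 + ⟪z, q.2⟫ := fun q => rfl
  set f' : ℝ × E → ℝ≥0∞ := f ∘ unshear a z w
  set k : ℝ × E → ℝ≥0∞ := fun q => g q * ENNReal.ofReal (Real.exp (ℓ q))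
  have hf' : Measurable f' := by fun_prop
  have hk : Measurable k := by fun_prop
  have comp_shear : f' ∘ shear a z w = f := funext fun p => congrArg f (unshear_shear a z w p)
  have lintegral_f' : ∫⁻ p, f' p = ∫⁻ p, f p := by
    rw [← (measurePreserving_shear a z w).lintegral_comp hf', ← comp_shear]
    rfl
  have lintegral_k : ∫⁻ q, g q ≤ ∫⁻ q, k (dualShear w q) :=
    (centered.lintegral_le_lintegral_mul_exp hg ℓ).trans_eq
      ((measurePreserving_dualShear w).lintegral_comp hk).symm
  rw [← comp_shear, map_withDensity_comp_of_measurePreserving (measurePreserving_shear a z w) hf']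
    at balanced
  rw [← lintegral_f']
  refine (mul_le_mul_right lintegral_k _).trans (hE.lintegral_prod_le_of_isBalanced hf'
    (hk.comp (measurePreserving_dualShear w).measurable) balanced fun p q => ?_)
  calc f' p * k (dualShear w q) = f (unshear a z w p) * g (dualShear w q) *
        ENNReal.ofReal (Real.exp (ℓ (dualShear w q))) := (mul_assoc _ _ _).symm
    _ ≤ C * ENNReal.ofReal (Real.exp (-((unshear a z w p).1 * (dualShear w q).1 +
          ⟪(unshear a z w p).2, (dualShear w q).2⟫))) *
        ENNReal.ofReal (Real.exp (ℓ (dualShear w q))) := mul_le_mul_left (h _ _) _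
    _ = C * ENNReal.ofReal (Real.exp (-(p.1 * q.1 + ⟪p.2, q.2⟫))) := by
      rw [pairing_unshear_dualShear, ← ℓ_apply, neg_add, Real.exp_add,
        ENNReal.ofReal_mul (Real.exp_pos _).le, mul_assoc, mul_assoc,
        ← ENNReal.ofReal_mul (Real.exp_pos _).le, ← Real.exp_add, neg_add_cancel, Real.exp_zero,
        ENNReal.ofReal_one, mul_one]

theorem FunctionalSantalo.lintegral_prod_le_of_integrable (hE : FunctionalSantalo E) {C : ℝ≥0∞}
    {f g : ℝ × E → ℝ≥0∞} (hf : Measurable f) (hg : Measurable g)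
    [IsFiniteMeasure (volume.withDensity f)]
    (integrable : Integrable (fun p => p) (volume.withDensity f))
    (centered : IsCentered (volume.withDensity g))
    (h : ∀ p q, f p * g q ≤ C * ENNReal.ofReal (Real.exp (-(p.1 * q.1 + ⟪p.2, q.2⟫)))) :
    (∫⁻ p, f p) * ∫⁻ q, g q ≤ C * ENNReal.ofReal (2 * Real.pi) ^ (finrank ℝ E + 1) := by
  have : NullSingletonClass ((volume.withDensity f).map Prod.fst) :=
    nullSingletonClass_map_fst_withDensity f
  obtain ⟨a, z, w, balanced⟩ := exists_isBalanced_map_shear (volume.withDensity f) integrable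
  exact hE.lintegral_prod_le_of_isBalanced_map_shear hf hg balanced centered h

theorem FunctionalSantalo.lintegral_prod_le (hE : FunctionalSantalo E) {C : ℝ≥0∞}
    {f g : ℝ × E → ℝ≥0∞} (hf : Measurable f) (hg : Measurable g)
    (centered : IsCentered (volume.withDensity g))
    (h : ∀ p q, f p * g q ≤ C * ENNReal.ofReal (Real.exp (-(p.1 * q.1 + ⟪p.2, q.2⟫)))) :
    (∫⁻ p, f p) * ∫⁻ q, g q ≤ C * ENNReal.ofReal (2 * Real.pi) ^ (finrank ℝ E + 1) := by
  refine lintegral_mul_le_of_monotone (measurable_truncation hf) (monotone_truncation f)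
    (iSup_truncation f) fun N => ?_
  have := isFiniteMeasure_withDensity_truncation volume f N
  exact hE.lintegral_prod_le_of_integrable (measurable_truncation hf N) hg
    (integrable_withDensity_truncation volume hf N) centered
    fun p q => (mul_le_mul_left (truncation_le f N p) _).trans (h p q)

section Splitting

variable {F : Type*} [NormedAddCommGroup F] [InnerProductSpace ℝ F] [FiniteDimensional ℝ F]
  [MeasurableSpace F] [BorelSpace F]

variable (E F) in
theorem exists_measurePreserving_equiv_real_prod (hF : finrank ℝ F = finrank ℝ E + 1) :
    ∃ L : (ℝ × E) ≃L[ℝ] F, MeasurePreserving L ∧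
      ∀ p q, ⟪L p, L q⟫ = p.1 * q.1 + ⟪p.2, q.2⟫ := by
  have finrank_eq : finrank ℝ (WithLp 2 (ℝ × E)) = finrank ℝ F := by
    rw [(WithLp.linearEquiv 2 ℝ (ℝ × E)).finrank_eq, finrank_prod, finrank_self, hF, add_comm]
  let U : WithLp 2 (ℝ × E) ≃ₗᵢ[ℝ] F :=
    (stdOrthonormalBasis ℝ _).equiv (stdOrthonormalBasis ℝ F) (finCongr finrank_eq)
  refine ⟨(WithLp.prodContinuousLinearEquiv 2 ℝ ℝ E).symm.trans U.toContinuousLinearEquiv,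
    U.measurePreserving.comp (WithLp.volume_preserving_toLp ℝ E), fun p q => ?_⟩
  have := U.inner_map_map (WithLp.toLp 2 p) (WithLp.toLp 2 q)
  rw [WithLp.prod_inner_apply, RCLike.inner_apply, conj_trivial, mul_comm] at this
  exact this

theorem FunctionalSantalo.of_finrank_eq_succ (hE : FunctionalSantalo E)
    (hF : finrank ℝ F = finrank ℝ E + 1) : FunctionalSantalo F := by
  obtain ⟨L, hL, inner_map⟩ := exists_measurePreserving_equiv_real_prod E F hF
  have hL_symm : MeasurePreserving L.symm :=
    hL.symm L.toHomeomorph.toMeasurableEquiv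
  intro C f g hf hg centered h
  have centered' : IsCentered (volume.withDensity (g ∘ L)) := by
    rw [← map_withDensity_comp_of_measurePreserving hL_symm (hg.comp hL.measurable),
      Function.comp_assoc, L.self_comp_symm, Function.comp_id]
    exact centered.map L.symm.toContinuousLinearMap
  rw [← hL.lintegral_comp hf, ← hL.lintegral_comp hg, hF]
  refine hE.lintegral_prod_le (hf.comp hL.measurable) (hg.comp hL.measurable) centered'
    fun p q => ?_
  rw [← inner_map]
  exact h (L p) (L q)

end Splitting

theorem volume_univ_of_finrank_eq_zero (hE : finrank ℝ E = 0) : volume (univ : Set E) = 1 := by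
  have : Subsingleton E := finrank_zero_iff.1 hE
  have cube := (stdOrthonormalBasis ℝ E).volume_parallelepiped
  have nonempty := nonempty_of_measure_ne_zero (cube.trans_ne one_ne_zero)
  rwa [Subsingleton.eq_univ_of_nonempty nonempty] at cube

theorem functionalSantalo_of_finrank_eq_zero (hE : finrank ℝ E = 0) : FunctionalSantalo E := by
  intro C f g _ _ _ h
  have : Subsingleton E := finrank_zero_iff.1 hE
  have lintegral_eq : ∀ k : E → ℝ≥0∞, ∫⁻ x, k x = k 0 := fun k => by
    simp_rw [fun x => congrArg k (Subsingleton.elim x 0), lintegral_const,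
      volume_univ_of_finrank_eq_zero hE, mul_one]
  simpa [lintegral_eq, hE] using h 0 0

theorem functionalSantalo_euclideanSpace : ∀ n, FunctionalSantalo (EuclideanSpace ℝ (Fin n))
  | 0 => functionalSantalo_of_finrank_eq_zero finrank_euclideanSpace_fin
  | n + 1 => (functionalSantalo_euclideanSpace n).of_finrank_eq_succ (by simp)

variable (E) in
theorem functionalSantalo : FunctionalSantalo E := by
  cases h : finrank ℝ E with
  | zero => exact functionalSantalo_of_finrank_eq_zero h
  | succ n => exact (functionalSantalo_euclideanSpace n).of_finrank_eq_succ (by simp [h])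

end FunctionalSantalo

/-! ### Radial decomposition along a gauge -/

section Radial

variable {ψ : ℝ → ℝ≥0∞}

/-- The function `r ↦ ∫_r^∞ ψ(t) dt`. -/
def tailIntegral (ψ : ℝ → ℝ≥0∞) (r : ℝ) : ℝ≥0∞ := ∫⁻ t in Ici r, ψ t

theorem antitone_tailIntegral (ψ : ℝ → ℝ≥0∞) : Antitone (tailIntegral ψ) := fun _ _ hrs =>
  lintegral_mono_set (Ici_subset_Ici.2 hrs)

theorem lintegral_tailIntegral_comp_mul {α : Type*} [MeasurableSpace α] {μ : Measure α} [SFinite μ]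
    {H : α → ℝ} (hH : Measurable H) (hH_nonneg : ∀ y, 0 ≤ H y) (hψ : Measurable ψ) {G : α → ℝ≥0∞}
    (hG : Measurable G) :
    ∫⁻ y, tailIntegral ψ (H y) * G y ∂μ =
      ∫⁻ t in Ioi 0, ψ t * ∫⁻ y in {y | H y ≤ t}, G y ∂μ := by
  let k : α → ℝ → ℝ≥0∞ := fun y t => {y | H y ≤ t}.indicator (fun y => ψ t * G y) y
  have hk : Measurable (Function.uncurry k) :=
    Measurable.indicator (s := {p : α × ℝ | H p.1 ≤ p.2}) (f := fun p => ψ p.2 * G p.1)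
      (by fun_prop) (measurableSet_le (by fun_prop) measurable_snd)
  have tail : ∀ y, tailIntegral ψ (H y) * G y = ∫⁻ t in Ioi 0, k y t := fun y => by
    have inter : Ici (H y) ∩ Ici 0 = Ici (H y) :=
      inter_eq_left.2 (Ici_subset_Ici.2 (hH_nonneg y))
    rw [tailIntegral, ← lintegral_mul_const _ hψ, setLIntegral_congr Ioi_ae_eq_Ici, ← inter,
      ← setLIntegral_indicator measurableSet_Ici]
    rfl
  simp_rw [tail]
  rw [lintegral_lintegral_swap hk.aemeasurable]
  refine lintegral_congr fun t => ?_
  rw [← lintegral_const_mul _ hG,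
    ← lintegral_indicator (measurableSet_le hH measurable_const)]

/-- The measure `ψ(t) tⁿ dt` on the positive half-line: the radial part, in dimension `n`, of the
measure with density `tailIntegral ψ ∘ H` for a gauge `H`. -/
def radialMeasure (ψ : ℝ → ℝ≥0∞) (n : ℕ) : Measure ℝ :=
  (volume.restrict (Ioi 0)).withDensity fun t => ψ t * ENNReal.ofReal t ^ n

instance (ψ : ℝ → ℝ≥0∞) (n : ℕ) : SFinite (radialMeasure ψ n) :=
  inferInstanceAs (SFinite (Measure.withDensity _ _))

theorem lintegral_radialMeasure (hψ : Measurable ψ) (n : ℕ) {k : ℝ → ℝ≥0∞} (hk : Measurable k) :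
    ∫⁻ t, k t ∂radialMeasure ψ n = ∫⁻ t in Ioi 0, ψ t * ENNReal.ofReal t ^ n * k t :=
  lintegral_withDensity_eq_lintegral_mul _ (by fun_prop) hk

theorem radialMeasure_univ (n : ℕ) :
    radialMeasure ψ n univ = ∫⁻ t in Ioi 0, ψ t * ENNReal.ofReal t ^ n := by
  rw [radialMeasure, withDensity_apply _ .univ, Measure.restrict_univ]

theorem radialMeasure_univ_ne_zero (hψ : Measurable ψ) (hψ_pos : ∀ t > 0, ψ t ≠ 0) (n : ℕ) :
    radialMeasure ψ n univ ≠ 0 := by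
  rw [radialMeasure_univ, ← pos_iff_ne_zero, setLIntegral_pos_iff (by fun_prop),
    inter_eq_right.2 fun t ht => ?_]
  · simp
  · exact mul_ne_zero (hψ_pos t ht) (pow_ne_zero n (ENNReal.ofReal_pos.2 ht).ne')

theorem ae_radialMeasure_pos (ψ : ℝ → ℝ≥0∞) (n : ℕ) : ∀ᵐ t ∂radialMeasure ψ n, 0 < t :=
  (withDensity_absolutelyContinuous _ _).ae_le (ae_restrict_mem measurableSet_Ioi)

theorem lintegral_ofReal_radialMeasure (hψ : Measurable ψ) (n : ℕ) :
    ∫⁻ t, ENNReal.ofReal t ∂radialMeasure ψ n = radialMeasure ψ (n + 1) univ := by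
  rw [lintegral_radialMeasure hψ n ENNReal.measurable_ofReal, radialMeasure_univ]
  simp_rw [pow_succ, mul_assoc]

theorem integrable_radialMeasure (hψ : Measurable ψ) (n : ℕ)
    [IsFiniteMeasure (radialMeasure ψ (n + 1))] :
    Integrable (fun t => t) (radialMeasure ψ n) := by
  refine ⟨aestronglyMeasurable_id, ?_⟩
  rw [hasFiniteIntegral_iff_ofReal ((ae_radialMeasure_pos ψ n).mono fun t ht => ht.le),
    lintegral_ofReal_radialMeasure hψ]
  exact measure_lt_top _ _

theorem integral_radialMeasure (hψ : Measurable ψ) (n : ℕ) :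
    ∫ t, t ∂radialMeasure ψ n = (radialMeasure ψ (n + 1)).real univ := by
  rw [integral_eq_lintegral_of_nonneg_ae ((ae_radialMeasure_pos ψ n).mono fun t ht => ht.le)
    aestronglyMeasurable_id, lintegral_ofReal_radialMeasure hψ, measureReal_def]

/-- A measurable nonnegative positively homogeneous function, such as the gauge of a convex
neighbourhood of the origin or a support function. -/
structure IsMeasurableGauge {V : Type*} [AddCommGroup V] [Module ℝ V] [MeasurableSpace V]
    (H : V → ℝ) : Prop where
  measurable : Measurable H
  nonneg : ∀ y, 0 ≤ H y
  map_smul : ∀ t > 0, ∀ y, H (t • y) = t * H y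

theorem IsMeasurableGauge.map_zero {V : Type*} [AddCommGroup V] [Module ℝ V] [MeasurableSpace V]
    {H : V → ℝ} (hH : IsMeasurableGauge H) : H 0 = 0 := by
  have := hH.map_smul 2 two_pos 0
  rw [smul_zero] at this
  linarith

variable {V : Type*} [NormedAddCommGroup V] [NormedSpace ℝ V] [MeasurableSpace V] [BorelSpace V]

theorem isMeasurableGauge_norm : IsMeasurableGauge (‖·‖ : V → ℝ) where
  measurable := measurable_norm
  nonneg := norm_nonneg
  map_smul _ ht y := norm_smul_of_nonneg ht.le y

variable [FiniteDimensional ℝ V] {μ : Measure V} [μ.IsAddHaarMeasure] {H : V → ℝ}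

theorem IsMeasurableGauge.setLIntegral_le (hH : IsMeasurableGauge H) {t : ℝ} (ht : 0 < t)
    {G : V → ℝ≥0∞} (hG : Measurable G) :
    ∫⁻ y in {y | H y ≤ t}, G y ∂μ =
      ENNReal.ofReal t ^ finrank ℝ V * ∫⁻ y in {y | H y ≤ 1}, G (t • y) ∂μ := by
  have preimage : (t • · : V → V) ⁻¹' {y | H y ≤ t} = {y | H y ≤ 1} := by
    ext y
    simp [hH.map_smul t ht, mul_le_iff_le_one_right ht]
  have scale : ENNReal.ofReal t ^ finrank ℝ V * ENNReal.ofReal |(t ^ finrank ℝ V)⁻¹| = 1 := by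
    rw [← ENNReal.ofReal_pow ht.le, ← ENNReal.ofReal_mul (by positivity),
      abs_of_pos (by positivity), mul_inv_cancel₀ (by positivity), ENNReal.ofReal_one]
  rw [← preimage, ← setLIntegral_map (measurableSet_le hH.measurable measurable_const) hG
    (measurable_const_smul t), Measure.map_addHaar_smul μ ht.ne', Measure.restrict_smul,
    lintegral_smul_measure, smul_eq_mul, ← mul_assoc, scale, one_mul]

theorem IsMeasurableGauge.withDensity_tailIntegral_eq_map (hH : IsMeasurableGauge H)
    (hψ : Measurable ψ) :
    μ.withDensity (tailIntegral ψ ∘ H) =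
      ((radialMeasure ψ (finrank ℝ V)).prod (μ.restrict {y | H y ≤ 1})).map
        (fun p => p.1 • p.2) := by
  refine Measure.ext_of_lintegral _ fun G hG => ?_
  have measurable_slice : Measurable fun t : ℝ => ∫⁻ y in {y | H y ≤ 1}, G (t • y) ∂μ :=
    Measurable.lintegral_prod_right' (f := fun p : ℝ × V => G (p.1 • p.2)) (by fun_prop)
  rw [lintegral_withDensity_eq_lintegral_mul _
      ((antitone_tailIntegral ψ).measurable.comp hH.measurable) hG,
    lintegral_map hG (by fun_prop), lintegral_prod _ (by fun_prop),
    lintegral_radialMeasure hψ _ measurable_slice]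
  refine (lintegral_tailIntegral_comp_mul hH.measurable hH.nonneg hψ hG).trans
    (setLIntegral_congr_fun measurableSet_Ioi fun t ht => ?_)
  rw [hH.setLIntegral_le ht hG, mul_assoc]

theorem IsMeasurableGauge.withDensity_tailIntegral_univ (hH : IsMeasurableGauge H)
    (hψ : Measurable ψ) :
    μ.withDensity (tailIntegral ψ ∘ H) univ =
      radialMeasure ψ (finrank ℝ V) univ * μ {y | H y ≤ 1} := by
  rw [hH.withDensity_tailIntegral_eq_map hψ, Measure.map_apply (by fun_prop) .univ, preimage_univ,
    ← univ_prod_univ, Measure.prod_prod, Measure.restrict_apply_univ]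

theorem IsMeasurableGauge.integrable_tailIntegral (hH : IsMeasurableGauge H) (hψ : Measurable ψ)
    [IsFiniteMeasure (radialMeasure ψ (finrank ℝ V + 1))]
    (integrable : IntegrableOn (fun y => y) {y | H y ≤ 1} μ) :
    Integrable (fun y => y) (μ.withDensity (tailIntegral ψ ∘ H)) := by
  rw [hH.withDensity_tailIntegral_eq_map hψ]
  exact (integrable_map_measure aestronglyMeasurable_id (by fun_prop)).2
    ((integrable_radialMeasure hψ _).smul_prod integrable)

theorem IsMeasurableGauge.integral_tailIntegral (hH : IsMeasurableGauge H) (hψ : Measurable ψ) :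
    ∫ y, y ∂μ.withDensity (tailIntegral ψ ∘ H) =
      (radialMeasure ψ (finrank ℝ V + 1)).real univ • ∫ y in {y | H y ≤ 1}, y ∂μ := by
  rw [hH.withDensity_tailIntegral_eq_map hψ, ← integral_radialMeasure hψ]
  exact (integral_map (by fun_prop) aestronglyMeasurable_id).trans
    (integral_prod_smul (fun t => t) fun y => y)

end Radial

section Profiles

/-- The profile whose tail integral is `exp (-r)`. -/
def expProfile (t : ℝ) : ℝ≥0∞ := ENNReal.ofReal (Real.exp (-t))

/-- The profile whose tail integral is `exp (-r ^ 2 / 2)` on `[0, ∞)`. -/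
def gaussianProfile (t : ℝ) : ℝ≥0∞ := ENNReal.ofReal (t * Real.exp (-t ^ 2 / 2))

@[fun_prop]
theorem measurable_expProfile : Measurable expProfile := by
  unfold expProfile
  fun_prop

@[fun_prop]
theorem measurable_gaussianProfile : Measurable gaussianProfile := by
  unfold gaussianProfile
  fun_prop

theorem expProfile_ne_zero (t : ℝ) : expProfile t ≠ 0 :=
  (ENNReal.ofReal_pos.2 (Real.exp_pos _)).ne'

theorem gaussianProfile_ne_zero {t : ℝ} (ht : 0 < t) : gaussianProfile t ≠ 0 :=
  (ENNReal.ofReal_pos.2 (by positivity)).ne'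

theorem tailIntegral_expProfile (r : ℝ) :
    tailIntegral expProfile r = ENNReal.ofReal (Real.exp (-r)) := by
  rw [← integral_exp_neg_Ioi r, ofReal_integral_eq_lintegral_ofReal
    (integrableOn_exp_neg_Ioi r) (.of_forall fun t => (Real.exp_pos _).le)]
  exact setLIntegral_congr Ioi_ae_eq_Ici.symm

theorem tailIntegral_gaussianProfile {r : ℝ} (hr : 0 ≤ r) :
    tailIntegral gaussianProfile r = ENNReal.ofReal (Real.exp (-r ^ 2 / 2)) := by
  have primitive : ∀ t ∈ Ici r, HasDerivAt (fun t : ℝ => -Real.exp (-t ^ 2 / 2))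
      (t * Real.exp (-t ^ 2 / 2)) t := fun t _ => by
    have := (((hasDerivAt_pow 2 t).fun_neg.div_const 2).exp).fun_neg
    refine this.congr_deriv ?_
    simp only [Nat.cast_ofNat, Nat.add_one_sub_one, pow_one]
    ring
  have nonneg : ∀ t ∈ Ioi r, 0 ≤ t * Real.exp (-t ^ 2 / 2) := fun t ht =>
    mul_nonneg (hr.trans (le_of_lt ht)) (Real.exp_pos _).le
  have limit : Tendsto (fun t : ℝ => -Real.exp (-t ^ 2 / 2)) atTop (𝓝 0) := by
    simp_rw [neg_div]
    rw [← neg_zero]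
    exact (Real.tendsto_exp_neg_atTop_nhds_zero.comp
      ((tendsto_pow_atTop two_ne_zero).atTop_div_const two_pos)).neg
  have integral := integral_Ioi_of_hasDerivAt_of_nonneg' primitive nonneg limit
  rw [zero_sub, neg_neg] at integral
  rw [← integral, ofReal_integral_eq_lintegral_ofReal
    (integrableOn_Ioi_deriv_of_nonneg' primitive nonneg limit)
    (ae_restrict_of_forall_mem measurableSet_Ioi nonneg)]
  exact setLIntegral_congr Ioi_ae_eq_Ici.symm

theorem isFiniteMeasure_radialMeasure {ψ k : ℝ → ℝ} {n : ℕ} (hk : IntegrableOn k (Ioi 0))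
    (h : ∀ t > 0, ψ t * t ^ n = k t) :
    IsFiniteMeasure (radialMeasure (fun t => ENNReal.ofReal (ψ t)) n) := by
  refine ⟨?_⟩
  rw [radialMeasure_univ]
  refine (setLIntegral_congr_fun measurableSet_Ioi fun t ht => ?_).trans_lt hk.lintegral_lt_top
  rw [← h t ht, ← ENNReal.ofReal_pow (le_of_lt ht),
    ENNReal.ofReal_mul' (pow_nonneg (le_of_lt ht) n)]

instance (n : ℕ) : IsFiniteMeasure (radialMeasure expProfile n) :=
  isFiniteMeasure_radialMeasure (k := fun t => Real.exp (-t) * t ^ ((n + 1 : ℝ) - 1))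
    (Real.GammaIntegral_convergent (by positivity)) fun t _ => by
      rw [add_sub_cancel_right, Real.rpow_natCast]

instance (n : ℕ) : IsFiniteMeasure (radialMeasure gaussianProfile n) :=
  isFiniteMeasure_radialMeasure
    (k := fun t => t ^ ((n + 1 : ℕ) : ℝ) * Real.exp (-(1 / 2) * t ^ 2))
    (integrableOn_rpow_mul_exp_neg_mul_sq (by norm_num)
      (by push_cast; linarith [n.cast_nonneg (α := ℝ)]))
    fun t _ => by
      rw [Real.rpow_natCast, neg_div, neg_mul, one_div_mul_eq_div]
      ring

variable {V : Type*} [NormedAddCommGroup V] [NormedSpace ℝ V] [MeasurableSpace V] [BorelSpace V]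
  [FiniteDimensional ℝ V] {μ : Measure V} [μ.IsAddHaarMeasure] {H : V → ℝ}

theorem IsMeasurableGauge.lintegral_gaussian (hH : IsMeasurableGauge H) :
    ∫⁻ y, ENNReal.ofReal (Real.exp (-H y ^ 2 / 2)) ∂μ =
      radialMeasure gaussianProfile (finrank ℝ V) univ * μ {y | H y ≤ 1} := by
  rw [← hH.withDensity_tailIntegral_univ measurable_gaussianProfile, withDensity_apply _ .univ,
    setLIntegral_univ]
  exact lintegral_congr fun y => (tailIntegral_gaussianProfile (hH.nonneg y)).symm

theorem IsMeasurableGauge.lintegral_exp_neg (hH : IsMeasurableGauge H) :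
    ∫⁻ y, ENNReal.ofReal (Real.exp (-H y)) ∂μ =
      radialMeasure expProfile (finrank ℝ V) univ * μ {y | H y ≤ 1} := by
  rw [← hH.withDensity_tailIntegral_univ measurable_expProfile, withDensity_apply _ .univ,
    setLIntegral_univ]
  exact lintegral_congr fun y => (tailIntegral_expProfile _).symm

theorem IsMeasurableGauge.isCentered_gaussian (hH : IsMeasurableGauge H)
    (finite : μ {y | H y ≤ 1} ≠ ∞)
    (integrable : IntegrableOn (fun y => y) {y | H y ≤ 1} μ)
    (integral : ∫ y in {y | H y ≤ 1}, y ∂μ = 0) :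
    IsCentered (μ.withDensity fun y => ENNReal.ofReal (Real.exp (-H y ^ 2 / 2))) := by
  have density : (fun y => ENNReal.ofReal (Real.exp (-H y ^ 2 / 2))) =
      tailIntegral gaussianProfile ∘ H := by
    ext y
    exact (tailIntegral_gaussianProfile (hH.nonneg y)).symm
  rw [density]
  refine ⟨⟨?_⟩, hH.integrable_tailIntegral measurable_gaussianProfile integrable, ?_⟩
  · rw [hH.withDensity_tailIntegral_univ measurable_gaussianProfile]
    exact ENNReal.mul_lt_top (measure_lt_top _ _) finite.lt_top
  · rw [hH.integral_tailIntegral measurable_gaussianProfile, integral, smul_zero]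

theorem sq_radialMeasure_gaussianProfile_mul_volume_closedBall (E : Type*) [NormedAddCommGroup E]
    [InnerProductSpace ℝ E] [FiniteDimensional ℝ E] [MeasurableSpace E] [BorelSpace E] :
    (radialMeasure gaussianProfile (finrank ℝ E) univ *
      volume (Metric.closedBall (0 : E) 1)) ^ 2 = ENNReal.ofReal (2 * Real.pi) ^ finrank ℝ E := by
  have ball : Metric.closedBall (0 : E) 1 = {y | ‖y‖ ≤ 1} := by
    ext y
    simp
  have gaussian := GaussianFourier.integral_rexp_neg_mul_sq_norm (V := E) (b := 1 / 2) (by norm_num)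
  have integrable : Integrable fun y : E => Real.exp (-(1 / 2) * ‖y‖ ^ 2) :=
    .of_integral_ne_zero (gaussian.trans_ne (by positivity))
  have exponent : ∀ y : E, -‖y‖ ^ 2 / 2 = -(1 / 2) * ‖y‖ ^ 2 := fun y => by ring
  rw [ball, ← isMeasurableGauge_norm.lintegral_gaussian]
  simp_rw [exponent]
  rw [← ofReal_integral_eq_lintegral_ofReal integrable (.of_forall fun y => (Real.exp_pos _).le),
    gaussian, ← ENNReal.ofReal_pow (by positivity), ← ENNReal.ofReal_pow (by positivity),
    ← Real.rpow_mul_natCast (by positivity), Nat.cast_ofNat, div_mul_cancel₀ _ two_ne_zero,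
    Real.rpow_natCast, div_div_eq_mul_div, div_one, mul_comm]

end Profiles

/-! ### Centering by minimality -/

section Sublevel

variable {V : Type*} [NormedAddCommGroup V] {h : V → ℝ} {r : ℝ}

theorem setOf_le_one_subset_closedBall (hr : 0 < r) (le_h : ∀ y, r * ‖y‖ ≤ h y) :
    {y | h y ≤ 1} ⊆ Metric.closedBall 0 (1 / r) := fun y hy => by
  rw [mem_closedBall_zero_iff, le_div_iff₀' hr]
  exact (le_h y).trans hy

variable [ProperSpace V] [MeasurableSpace V] {μ : Measure V} [IsFiniteMeasureOnCompacts μ]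

theorem measure_setOf_le_one_lt_top (hr : 0 < r) (le_h : ∀ y, r * ‖y‖ ≤ h y) :
    μ {y | h y ≤ 1} < ∞ :=
  (measure_mono (setOf_le_one_subset_closedBall hr le_h)).trans_lt measure_closedBall_lt_top

theorem integrableOn_setOf_le_one [OpensMeasurableSpace V] (hr : 0 < r)
    (le_h : ∀ y, r * ‖y‖ ≤ h y) : IntegrableOn (fun y => y) {y | h y ≤ 1} μ :=
  (continuous_id.continuousOn.integrableOn_compact (isCompact_closedBall 0 (1 / r))).mono_set
    (setOf_le_one_subset_closedBall hr le_h)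

end Sublevel

section Centering

variable {E : Type*} [NormedAddCommGroup E] [InnerProductSpace ℝ E] {h : E → ℝ} {r : ℝ}

theorem sub_norm_mul_norm_le_sub_inner (le_h : ∀ y, r * ‖y‖ ≤ h y) (w y : E) :
    (r - ‖w‖) * ‖y‖ ≤ h y - ⟪w, y⟫ := by
  rw [sub_mul]
  exact sub_le_sub (le_h y) (real_inner_le_norm w y)

variable [MeasurableSpace E]

theorem integral_inner_eq_zero_of_isLocalMin {μ : Measure E}
    (integrable : ∀ᶠ w in 𝓝 0, Integrable (fun y => Real.exp ⟪w, y⟫) μ)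
    (hmin : IsLocalMin (fun w => ∫ y, Real.exp ⟪w, y⟫ ∂μ) 0) (v : E) :
    ∫ y, ⟪v, y⟫ ∂μ = 0 := by
  have tendsto : Tendsto (fun t : ℝ => t • v) (𝓝 0) (𝓝 0) :=
    (by fun_prop : Continuous fun t : ℝ => t • v).tendsto' 0 0 (zero_smul ℝ v)
  have mem : 0 ∈ interior (ProbabilityTheory.integrableExpSet (fun y => ⟪v, y⟫) μ) := by
    rw [mem_interior_iff_mem_nhds]
    filter_upwards [tendsto.eventually integrable] with t ht
    simpa only [ProbabilityTheory.integrableExpSet, mem_ofPred_eq, real_inner_smul_left] using ht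
  have min : IsLocalMin (ProbabilityTheory.mgf (fun y => ⟪v, y⟫) μ) 0 := by
    filter_upwards [tendsto.eventually hmin] with t ht
    simpa only [ProbabilityTheory.mgf, real_inner_smul_left, inner_zero_left, zero_mul] using ht
  simpa only [zero_mul, Real.exp_zero, mul_one] using
    min.hasDerivAt_eq_zero (ProbabilityTheory.hasDerivAt_mgf mem)

variable [BorelSpace E] [FiniteDimensional ℝ E]

theorem IsMeasurableGauge.sub_inner (hh : IsMeasurableGauge h) (le_h : ∀ y, r * ‖y‖ ≤ h y) {w : E}
    (hw : ‖w‖ ≤ r) : IsMeasurableGauge fun y => h y - ⟪w, y⟫ where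
  measurable := hh.measurable.sub (by fun_prop)
  nonneg y := (mul_nonneg (sub_nonneg.2 hw) (norm_nonneg y)).trans
    (sub_norm_mul_norm_le_sub_inner le_h w y)
  map_smul t ht y := by rw [hh.map_smul t ht, real_inner_smul_right, mul_sub]

theorem IsMeasurableGauge.lintegral_exp_inner (hh : IsMeasurableGauge h)
    (le_h : ∀ y, r * ‖y‖ ≤ h y) {w : E} (hw : ‖w‖ ≤ r) :
    ∫⁻ y, ENNReal.ofReal (Real.exp ⟪w, y⟫) ∂volume.withDensity (tailIntegral expProfile ∘ h) =
      radialMeasure expProfile (finrank ℝ E) univ * volume {y | h y - ⟪w, y⟫ ≤ 1} := by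
  rw [← (hh.sub_inner le_h hw).lintegral_exp_neg, lintegral_withDensity_eq_lintegral_mul _
    ((antitone_tailIntegral _).measurable.comp hh.measurable) (by fun_prop)]
  refine lintegral_congr fun y => ?_
  rw [Pi.mul_apply, Function.comp_apply, tailIntegral_expProfile,
    ← ENNReal.ofReal_mul (Real.exp_pos _).le, ← Real.exp_add, neg_sub, neg_add_eq_sub]

theorem IsMeasurableGauge.integrable_exp_inner (hh : IsMeasurableGauge h)
    (le_h : ∀ y, r * ‖y‖ ≤ h y) {w : E} (hw : ‖w‖ < r) :
    Integrable (fun y => Real.exp ⟪w, y⟫) (volume.withDensity (tailIntegral expProfile ∘ h)) := by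
  refine ⟨by fun_prop, ?_⟩
  rw [hasFiniteIntegral_iff_ofReal (.of_forall fun y => (Real.exp_pos _).le),
    hh.lintegral_exp_inner le_h hw.le]
  exact ENNReal.mul_lt_top (measure_lt_top _ _)
    (measure_setOf_le_one_lt_top (sub_pos.2 hw) (sub_norm_mul_norm_le_sub_inner le_h w))

theorem IsMeasurableGauge.integral_exp_inner (hh : IsMeasurableGauge h)
    (le_h : ∀ y, r * ‖y‖ ≤ h y) {w : E} (hw : ‖w‖ ≤ r) :
    ∫ y, Real.exp ⟪w, y⟫ ∂volume.withDensity (tailIntegral expProfile ∘ h) =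
      (radialMeasure expProfile (finrank ℝ E)).real univ *
        volume.real {y | h y - ⟪w, y⟫ ≤ 1} := by
  rw [integral_eq_lintegral_of_nonneg_ae (.of_forall fun y => (Real.exp_pos _).le) (by fun_prop),
    hh.lintegral_exp_inner le_h hw, ENNReal.toReal_mul, measureReal_def, measureReal_def]

theorem IsMeasurableGauge.isLocalMin_integral_exp_inner (hh : IsMeasurableGauge h) (hr : 0 < r)
    (le_h : ∀ y, r * ‖y‖ ≤ h y) (hmin : IsLocalMin (fun w => volume {y | h y - ⟪w, y⟫ ≤ 1}) 0) :
    IsLocalMin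
      (fun w => ∫ y, Real.exp ⟪w, y⟫ ∂volume.withDensity (tailIntegral expProfile ∘ h)) 0 := by
  filter_upwards [hmin, Metric.ball_mem_nhds 0 hr] with w hw w_mem
  rw [mem_ball_zero_iff] at w_mem
  rw [hh.integral_exp_inner le_h w_mem.le,
    hh.integral_exp_inner le_h (norm_zero.trans_le hr.le)]
  exact mul_le_mul_of_nonneg_left (ENNReal.toReal_mono (measure_setOf_le_one_lt_top
    (sub_pos.2 w_mem) (sub_norm_mul_norm_le_sub_inner le_h w)).ne hw) measureReal_nonneg

theorem IsMeasurableGauge.setIntegral_eq_zero_of_isLocalMin (hh : IsMeasurableGauge h) (hr : 0 < r)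
    (le_h : ∀ y, r * ‖y‖ ≤ h y) (hmin : IsLocalMin (fun w => volume {y | h y - ⟪w, y⟫ ≤ 1}) 0) :
    ∫ y in {y | h y ≤ 1}, y = 0 := by
  have integrable_exp : ∀ᶠ w in 𝓝 0, Integrable (fun y => Real.exp ⟪w, y⟫)
      (volume.withDensity (tailIntegral expProfile ∘ h)) := by
    filter_upwards [Metric.ball_mem_nhds 0 hr] with w hw
    exact hh.integrable_exp_inner le_h (mem_ball_zero_iff.1 hw)
  have integrable := hh.integrable_tailIntegral measurable_expProfile
    (integrableOn_setOf_le_one (μ := volume) hr le_h)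
  have integral : ∫ y, y ∂volume.withDensity (tailIntegral expProfile ∘ h) = 0 :=
    ext_inner_left ℝ fun v => by
      rw [← integral_inner integrable, inner_zero_right]
      exact integral_inner_eq_zero_of_isLocalMin integrable_exp
        (hh.isLocalMin_integral_exp_inner hr le_h hmin) v
  rw [hh.integral_tailIntegral measurable_expProfile] at integral
  refine (smul_eq_zero.1 integral).resolve_left ?_
  rw [measureReal_eq_zero_iff]
  exact radialMeasure_univ_ne_zero measurable_expProfile (fun t _ => expProfile_ne_zero t) _

end Centering

/-! ### Polar bodies -/

section Polar

variable {E : Type*} [NormedAddCommGroup E] [InnerProductSpace ℝ E] {K : Set E}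

/-- The support function of `K`. Its value is the junk value `0` at any `y` for which the functional
`⟪·, y⟫` is not bounded above on `K`. -/
def supportFun (K : Set E) (y : E) : ℝ := sSup ((fun x => ⟪x, y⟫) '' K)

theorem inner_le_supportFun (hK : Bornology.IsBounded K) {x : E} (hx : x ∈ K) (y : E) :
    ⟪x, y⟫ ≤ supportFun K y := by
  obtain ⟨R, hR⟩ := hK.exists_norm_le
  refine le_csSup ⟨R * ‖y‖, ?_⟩ (mem_image_of_mem _ hx)
  rintro _ ⟨u, hu, rfl⟩
  exact (real_inner_le_norm u y).trans (mul_le_mul_of_nonneg_right (hR u hu) (norm_nonneg y))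

theorem supportFun_le_iff (hK : Bornology.IsBounded K) (hK_nonempty : K.Nonempty) {y : E} {c : ℝ} :
    supportFun K y ≤ c ↔ ∀ x ∈ K, ⟪x, y⟫ ≤ c :=
  ⟨fun h _ hx => (inner_le_supportFun hK hx y).trans h,
    fun h => csSup_le (hK_nonempty.image _) (forall_mem_image.2 h)⟩

theorem supportFun_smul (K : Set E) {t : ℝ} (ht : 0 ≤ t) (y : E) :
    supportFun K (t • y) = t * supportFun K y := by
  rw [supportFun, supportFun, ← smul_eq_mul, ← Real.sSup_smul_of_nonneg ht, ← image_smul,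
    image_image]
  simp_rw [real_inner_smul_right, smul_eq_mul]

theorem mul_norm_le_supportFun_sub_inner (hK : Bornology.IsBounded K) {z : E} {r : ℝ} (hr : 0 ≤ r)
    (hzK : Metric.closedBall z r ⊆ K) (y : E) : r * ‖y‖ ≤ supportFun K y - ⟪z, y⟫ := by
  have mem : z + (r * ‖y‖⁻¹) • y ∈ K := hzK <| by
    rw [mem_closedBall_iff_norm, add_sub_cancel_left, norm_smul_of_nonneg (by positivity),
      mul_assoc]
    exact mul_le_of_le_one_right hr inv_mul_le_one
  have inner_eq : ⟪z + (r * ‖y‖⁻¹) • y, y⟫ = r * ‖y‖ + ⟪z, y⟫ := by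
    rw [inner_add_left, real_inner_smul_left, real_inner_self_eq_norm_mul_norm, mul_assoc,
      ← mul_assoc ‖y‖⁻¹, inv_mul_mul_self, add_comm]
  exact le_sub_iff_add_le.2 (inner_eq ▸ inner_le_supportFun hK mem y)

theorem measurable_supportFun [MeasurableSpace E] [OpensMeasurableSpace E]
    (hK : Bornology.IsBounded K) (hK_nonempty : K.Nonempty) : Measurable (supportFun K) := by
  refine measurable_of_Iic fun c => ?_
  have preimage : supportFun K ⁻¹' Iic c = ⋂ x ∈ K, {y | ⟪x, y⟫ ≤ c} := by
    ext y
    simp [supportFun_le_iff hK hK_nonempty]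
  rw [preimage]
  exact (isClosed_biInter fun x _ => isClosed_le (by fun_prop) continuous_const).measurableSet

theorem isMeasurableGauge_supportFun_sub_inner [MeasurableSpace E] [OpensMeasurableSpace E]
    (hK : Bornology.IsBounded K) {z : E} (hz : z ∈ K) :
    IsMeasurableGauge fun y => supportFun K y - ⟪z, y⟫ where
  measurable := (measurable_supportFun hK ⟨z, hz⟩).sub (by fun_prop)
  nonneg y := sub_nonneg.2 (inner_le_supportFun hK hz y)
  map_smul t ht y := by rw [supportFun_smul K ht.le, real_inner_smul_right, mul_sub]

theorem isMeasurableGauge_supportFun [MeasurableSpace E] [OpensMeasurableSpace E]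
    (hK : Bornology.IsBounded K) (zero_mem : 0 ∈ K) : IsMeasurableGauge (supportFun K) := by
  simpa only [inner_zero_left, sub_zero] using isMeasurableGauge_supportFun_sub_inner hK zero_mem

/-- The polar of `K` with respect to `z`, as `polarBody` but in any inner product space. -/
def polarAt (K : Set E) (z : E) : Set E := {x | ∀ y ∈ K, ⟪x - z, y - z⟫ ≤ 1}

theorem preimage_add_right_polarAt (hK : Bornology.IsBounded K) (hK_nonempty : K.Nonempty) (z : E) :
    (· + z) ⁻¹' polarAt K z = {y | supportFun K y - ⟪z, y⟫ ≤ 1} := by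
  ext y
  rw [mem_preimage, polarAt, mem_ofPred_eq, mem_ofPred_eq, sub_le_iff_le_add,
    supportFun_le_iff hK hK_nonempty, add_sub_cancel_right]
  refine forall₂_congr fun x _ => ?_
  rw [real_inner_comm, inner_sub_left, sub_le_iff_le_add]

theorem inner_le_supportFun_mul [MeasurableSpace E] {h : E → ℝ} (hh : IsMeasurableGauge h) {r : ℝ}
    (hr : 0 < r) (le_h : ∀ y, r * ‖y‖ ≤ h y) (x y : E) :
    ⟪x, y⟫ ≤ supportFun {y | h y ≤ 1} x * h y := by
  rcases (hh.nonneg y).eq_or_lt with h_eq | h_pos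
  · have norm_le : ‖y‖ ≤ 0 := (mul_nonpos_iff_pos_imp_nonpos.1 ((le_h y).trans h_eq.ge)).1 hr
    rw [norm_le_zero_iff.1 norm_le, inner_zero_right, hh.map_zero, mul_zero]
  · have mem : h ((h y)⁻¹ • y) ≤ 1 := by
      rw [hh.map_smul _ (inv_pos.2 h_pos), inv_mul_cancel₀ h_pos.ne']
    have bounded := Metric.isBounded_closedBall.subset (setOf_le_one_subset_closedBall hr le_h)
    have le := inner_le_supportFun bounded mem x
    rwa [real_inner_smul_left, real_inner_comm, inv_mul_le_iff₀' h_pos] at le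

variable [MeasurableSpace E] [BorelSpace E] [FiniteDimensional ℝ E]

theorem volume_polarAt (hK : Bornology.IsBounded K) (hK_nonempty : K.Nonempty) (z : E) :
    volume (polarAt K z) = volume {y | supportFun K y - ⟪z, y⟫ ≤ 1} := by
  rw [← preimage_add_right_polarAt hK hK_nonempty, measure_preimage_add_right]

theorem volume_mul_volume_le_of_inner_le_mul {H h : E → ℝ} (hH : IsMeasurableGauge H)
    (hh : IsMeasurableGauge h) (finite : volume {y | h y ≤ 1} ≠ ∞)
    (integrable : IntegrableOn (fun y => y) {y | h y ≤ 1})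
    (integral : ∫ y in {y | h y ≤ 1}, y = 0) (inner_le : ∀ x y, ⟪x, y⟫ ≤ H x * h y) :
    volume {x | H x ≤ 1} * volume {y | h y ≤ 1} ≤ volume (Metric.closedBall (0 : E) 1) ^ 2 := by
  set c := radialMeasure gaussianProfile (finrank ℝ E) univ with hc
  have c_ne_zero : c ≠ 0 := radialMeasure_univ_ne_zero measurable_gaussianProfile
    (fun t ht => gaussianProfile_ne_zero ht) _
  have dual : ∀ x y, ENNReal.ofReal (Real.exp (-H x ^ 2 / 2)) *
      ENNReal.ofReal (Real.exp (-h y ^ 2 / 2)) ≤ 1 * ENNReal.ofReal (Real.exp (-⟪x, y⟫)) := by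
    intro x y
    rw [one_mul, ← ENNReal.ofReal_mul (Real.exp_pos _).le, ← Real.exp_add]
    gcongr
    linarith [inner_le x y, two_mul_le_add_sq (H x) (h y)]
  have measurable_gaussian : ∀ {k : E → ℝ}, IsMeasurableGauge k →
      Measurable fun x => ENNReal.ofReal (Real.exp (-k x ^ 2 / 2)) := fun hk => by
    have := hk.measurable
    fun_prop
  have gaussian := functionalSantalo E 1 _ _ (measurable_gaussian hH) (measurable_gaussian hh)
    (hh.isCentered_gaussian finite integrable integral) dual
  rw [hH.lintegral_gaussian, hh.lintegral_gaussian, one_mul,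
    ← sq_radialMeasure_gaussianProfile_mul_volume_closedBall, ← hc, mul_mul_mul_comm, ← sq,
    mul_pow] at gaussian
  exact (ENNReal.mul_le_mul_iff_right (pow_ne_zero 2 c_ne_zero)
    (ENNReal.pow_ne_top (measure_ne_top _ _))).1 gaussian

theorem IsMeasurableGauge.volume_mul_volume_le {h : E → ℝ} (hh : IsMeasurableGauge h) {r : ℝ}
    (hr : 0 < r) (le_h : ∀ y, r * ‖y‖ ≤ h y) (integral : ∫ y in {y | h y ≤ 1}, y = 0) {A : Set E}
    (hA : ∀ x ∈ A, ∀ y, ⟪x, y⟫ ≤ h y) :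
    volume A * volume {y | h y ≤ 1} ≤ volume (Metric.closedBall (0 : E) 1) ^ 2 := by
  have bounded := Metric.isBounded_closedBall.subset (setOf_le_one_subset_closedBall hr le_h)
  have zero_mem : 0 ∈ {y | h y ≤ 1} := hh.map_zero.trans_le zero_le_one
  have subset : A ⊆ {x | supportFun {y | h y ≤ 1} x ≤ 1} := fun x hx =>
    (supportFun_le_iff bounded ⟨0, zero_mem⟩).2 fun y hy =>
      (real_inner_comm x y).trans_le ((hA x hx y).trans hy)
  exact (mul_le_mul_left (measure_mono subset) _).trans <| volume_mul_volume_le_of_inner_le_mul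
    (isMeasurableGauge_supportFun bounded zero_mem) hh (measure_setOf_le_one_lt_top hr le_h).ne
    (integrableOn_setOf_le_one hr le_h) integral (inner_le_supportFun_mul hh hr le_h)

theorem setIntegral_supportFun_eq_zero_of_isLocalMin {z : E} {r : ℝ} (hK : Bornology.IsBounded K)
    (hr : 0 < r) (hzK : Metric.closedBall z r ⊆ K)
    (hmin : IsLocalMin (fun w => volume (polarAt K w)) z) :
    ∫ y in {y | supportFun K y - ⟪z, y⟫ ≤ 1}, y = 0 := by
  have hz : z ∈ K := hzK (Metric.mem_closedBall_self hr.le)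
  have tendsto : Tendsto (z + ·) (𝓝 0) (𝓝 z) := (continuous_const_add z).tendsto' 0 z (add_zero z)
  refine (isMeasurableGauge_supportFun_sub_inner hK hz).setIntegral_eq_zero_of_isLocalMin hr
    (mul_norm_le_supportFun_sub_inner hK hr.le hzK) ?_
  filter_upwards [tendsto.eventually hmin] with w hw
  simpa only [volume_polarAt hK ⟨z, hz⟩, inner_add_left, ← sub_sub, inner_zero_left, sub_zero]
    using hw

theorem blaschke_santalo_general (hK : Bornology.IsBounded K) {z : E} (hz : z ∈ interior K)
    (hmin : IsLocalMin (fun w => volume (polarAt K w)) z) :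
    volume K * volume (polarAt K z) ≤ volume (Metric.closedBall (0 : E) 1) ^ 2 := by
  obtain ⟨r, hr, hzK⟩ := Metric.nhds_basis_closedBall.mem_iff.1 (mem_interior_iff_mem_nhds.1 hz)
  have inner_le : ∀ x ∈ (· + z) ⁻¹' K, ∀ y, ⟪x, y⟫ ≤ supportFun K y - ⟪z, y⟫ := fun x hx y => by
    rw [le_sub_iff_add_le, ← inner_add_left]
    exact inner_le_supportFun hK hx y
  rw [volume_polarAt hK ⟨z, interior_subset hz⟩, ← measure_preimage_add_right volume z K]
  exact (isMeasurableGauge_supportFun_sub_inner hK (interior_subset hz)).volume_mul_volume_le hr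
    (mul_norm_le_supportFun_sub_inner hK hr.le hzK)
    (setIntegral_supportFun_eq_zero_of_isLocalMin hK hr hzK hmin) inner_le

end Polar

end

/-- **Blaschke–Santaló inequality.** If `K` is a convex body in `ℝⁿ`, `n ≥ 2`, and
`z` is the Santaló point of `K` (the point of `int K` minimizing the volume of the
polar), then `|K|·|K^z| ≤ κ_n²` where `κ_n` is the volume of the unit ball. -/
theorem blaschke_santalo {n : ℕ} (hn : 2 ≤ n)
    (K : Set (EuclideanSpace ℝ (Fin n)))
    (hKcomp : IsCompact K) (hKconv : Convex ℝ K) (hKint : (interior K).Nonempty)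
    (z : EuclideanSpace ℝ (Fin n)) (hz : z ∈ interior K)
    (hsantalo : ∀ w ∈ interior K, volume (polarBody K z) ≤ volume (polarBody K w)) :
    volume K * volume (polarBody K z) ≤
      (volume (Metric.closedBall (0 : EuclideanSpace ℝ (Fin n)) 1)) ^ 2 :=
  blaschke_santalo_general hKcomp.isBounded hz
    (Filter.mem_of_superset (isOpen_interior.mem_nhds hz) hsantalo)
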